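/- arXiv:1009.4826 — 3 statements merged into one kernel-verified Lean document; each statement's English description precedes it below -/
import Mathlib

section
/- For n > m ≥ 1, the set of n×m integer matrices whose m×m minors have gcd 1 (rectangular unimodular matrices) has natural density (ζ(n)·ζ(n−1)·...·ζ(n−m+1))^{-1}. -/
open Filter

/-- Real value of the Riemann zeta function at a natural number argument. -/
noncomputable def zetaR (k : ℕ) : ℝ := ∑' n : ℕ, (1 : ℝ) / (n + 1 : ℝ) ^ k

open scoped Classical in
/-- Number of matrices of `S` in the cube of side `2B` centered at `z`. -/
noncomputable def matCubeCount {n m : ℕ} (S : Set (Matrix (Fin n) (Fin m) ℤ))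
    (z : Matrix (Fin n) (Fin m) ℤ) (B : ℕ) : ℕ :=
  (Finset.filter (fun A : Fin n → Fin m → ℤ => Matrix.of A ∈ S)
    (Fintype.piFinset fun i =>
      Fintype.piFinset fun l => Finset.Ico (z i l - (B : ℤ)) (z i l + (B : ℤ)))).card

/-- Natural density of a set of `n × m` integer matrices, via counting in cubes
of side `2B` and arbitrary center, normalized by `(2B)^(nm)`. -/
def HasMatDensity {n m : ℕ} (S : Set (Matrix (Fin n) (Fin m) ℤ)) (δ : ℝ) : Prop :=
  ∀ z : Matrix (Fin n) (Fin m) ℤ,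
    Tendsto (fun B : ℕ => (matCubeCount S z B : ℝ) / (2 * (B : ℝ)) ^ (n * m))
      atTop (nhds δ)

open scoped Classical in
/-- The gcd of the `i × i` minors of the `n × i` submatrix of `A` formed by the
columns `c`, the minors being indexed by strictly monotone row selections. -/
noncomputable def minorsGcd {n m i : ℕ} (A : Matrix (Fin n) (Fin m) ℤ)
    (c : Fin i → Fin m) : ℤ :=
  Finset.univ.gcd fun ρ : {ρ : Fin i → Fin n // StrictMono ρ} =>
    (A.submatrix ρ.1 c).det

/-!
A matrix `A` is unimodular iff its columns are linearly independent modulo every prime `p`. A random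
`n × m` matrix over `𝔽_p` has independent columns with probability `∏_{i < m} (1 - p^{-(n-i)})`, and
by the Chinese remainder theorem the conditions at finitely many primes are independent, so the
Euler products of `ζ(n), …, ζ(n-m+1)` give the density once the primes `p > T` are shown to
contribute `O(1/T)` on all large cubes.

This last step is Ekedahl's sieve. If the columns of `A` are dependent mod `p`, let `k` be the
largest number such that the first `k` are independent. Some `k × k` minor `M` on these columns is
prime to `p`, while bordering it by column `k` and any further row gives a multiple of `p`. As
`n > m` there are two rows to choose, and the two bordered minors are affine functions, with leading
coefficient `M`, of two different entries `s, t`. For fixed other entries, a prime `T < p ≤ 2B`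
divides both for at most `O((2B/p)²)` pairs `(s, t)`; the first bordered minor, when nonzero, has a
bounded number of prime factors `p > 2B`, each of which leaves at most one value of `t`.
-/

section Minors

theorem linearIndependent_col_of_det_submatrix_ne_zero {K : Type*} [Field K] {n r : ℕ}
    {A : Matrix (Fin n) (Fin r) K} {ρ : Fin r → Fin n} (h : (A.submatrix ρ id).det ≠ 0) :
    LinearIndependent K A.col := by
  rw [← isUnit_iff_ne_zero, ← Matrix.isUnit_iff_isUnit_det,
    ← Matrix.linearIndependent_cols_iff_isUnit] at h
  exact LinearIndependent.of_comp (LinearMap.funLeft K K ρ) h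

theorem linearIndependent_col_iff_exists_det_ne_zero {K : Type*} [Field K] {n r : ℕ}
    {A : Matrix (Fin n) (Fin r) K} :
    LinearIndependent K A.col ↔
      ∃ ρ : Fin r → Fin n, StrictMono ρ ∧ (A.submatrix ρ id).det ≠ 0 := by
  refine ⟨fun h => ?_, fun ⟨_, _, hρ⟩ => linearIndependent_col_of_det_submatrix_ne_zero hρ⟩
  have hrank : Module.finrank K (Submodule.span K (Set.range A.row)) = r := by
    rw [← Matrix.rank_eq_finrank_span_row, ← Matrix.rank_transpose]
    simpa using h.rank_matrix (M := A.transpose)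
  have hbasis := Submodule.exists_fun_fin_finrank_span_eq K (Set.range A.row)
  rw [hrank] at hbasis
  obtain ⟨f, hf, -, hli⟩ := hbasis
  choose ρ hρ using hf
  obtain rfl : A.row ∘ ρ = f := funext hρ
  have hinj : Function.Injective ρ := hli.injective.of_comp
  refine ⟨ρ ∘ Tuple.sort ρ, (Tuple.monotone_sort ρ).strictMono_of_injective
    (hinj.comp (Tuple.sort ρ).injective), ?_⟩
  rw [← isUnit_iff_ne_zero, ← Matrix.isUnit_iff_isUnit_det,
    ← Matrix.linearIndependent_rows_iff_isUnit]
  exact hli.comp _ (Tuple.sort ρ).injective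

theorem minorsGcd_eq_one_iff {n m i : ℕ} {A : Matrix (Fin n) (Fin m) ℤ} {c : Fin i → Fin m} :
    minorsGcd A c = 1 ↔ ∀ p : ℕ, p.Prime →
      LinearIndependent (ZMod p) ((A.submatrix id c).map (Int.cast : ℤ → ZMod p)).col := by
  have hnorm : normalize (minorsGcd A c) = minorsGcd A c := Finset.normalize_gcd
  rw [← hnorm, normalize_eq_one, Int.isUnit_iff_natAbs_eq, Nat.eq_one_iff_not_exists_prime_dvd]
  refine forall₂_congr fun p hp => ?_
  have := Fact.mk hp
  rw [linearIndependent_col_iff_exists_det_ne_zero, ← Int.natCast_dvd, minorsGcd,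
    Finset.dvd_gcd_iff]
  simp only [Finset.mem_univ, true_imp_iff, Subtype.forall, not_forall, exists_prop]
  refine exists_congr fun ρ => and_congr_right fun _ => not_congr ?_
  rw [← ZMod.intCast_zmod_eq_zero_iff_dvd, Int.cast_det]
  rfl

theorem exists_linearIndependent_initial_segment {K V : Type*} [DivisionRing K] [AddCommGroup V]
    [Module K V] {m : ℕ} {v : Fin m → V} (h : ¬ LinearIndependent K v) :
    ∃ k : Fin m, LinearIndependent K (v ∘ Fin.castLE k.isLt.le) ∧
      ¬ LinearIndependent K (v ∘ Fin.castLE k.isLt) := by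
  by_contra! hstep
  have hall : ∀ (r) (hr : r ≤ m), LinearIndependent K (v ∘ Fin.castLE hr) := by
    intro r
    induction r with
    | zero => exact fun _ => linearIndependent_empty_type
    | succ r ih => exact fun hr => hstep ⟨r, hr⟩ (ih (Nat.le_of_succ_le hr))
  exact h (hall m le_rfl)

theorem det_sub_minor_mul_corner_congr {R : Type*} [CommRing R] {k : ℕ}
    {A A' : Matrix (Fin (k + 1)) (Fin (k + 1)) R}
    (h : ∀ i j, ¬ (i = Fin.last k ∧ j = Fin.last k) → A i j = A' i j) :
    A.det - (A.submatrix Fin.castSucc Fin.castSucc).det * A (Fin.last k) (Fin.last k) =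
      A'.det - (A'.submatrix Fin.castSucc Fin.castSucc).det * A' (Fin.last k) (Fin.last k) := by
  have expand (D : Matrix (Fin (k + 1)) (Fin (k + 1)) R) :
      D.det - (D.submatrix Fin.castSucc Fin.castSucc).det * D (Fin.last k) (Fin.last k) =
        ∑ j : Fin k, (-1) ^ (k + (j : ℕ)) * D (Fin.last k) j.castSucc *
          (D.submatrix Fin.castSucc j.castSucc.succAbove).det := by
    rw [D.det_succ_row (Fin.last k), Fin.sum_univ_castSucc, Fin.succAbove_last]
    simp only [Fin.val_last, Fin.val_castSucc, ← two_mul, pow_mul, neg_one_sq, one_pow]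
    ring
  rw [expand, expand]
  refine Finset.sum_congr rfl fun j _ => ?_
  congr 2
  · rw [h _ _ (by simp [j.castSucc_lt_last.ne])]
  · ext a b
    exact h _ _ (by simp)

variable {R : Type*} [CommRing R] {n m : ℕ}

/-- The minor of `A` on the rows `ρ` and the first `k` columns. -/
def leadingMinor (A : Matrix (Fin n) (Fin m) R) (k : Fin m) (ρ : Fin k → Fin n) : R :=
  (A.submatrix ρ (Fin.castLE k.isLt.le)).det

/-- The minor `leadingMinor A k ρ` enlarged by the row `i` and the column `k`, so that its
bottom right corner is the entry `A i k`. -/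
def borderedMinor (A : Matrix (Fin n) (Fin m) R) (k : Fin m) (ρ : Fin k → Fin n) (i : Fin n) : R :=
  (A.submatrix (Fin.snoc ρ i : Fin (k + 1) → Fin n) (Fin.castLE k.isLt)).det

theorem leadingMinor_map {R' : Type*} [CommRing R'] (f : R →+* R') (A : Matrix (Fin n) (Fin m) R)
    (k : Fin m) (ρ : Fin k → Fin n) : leadingMinor (A.map f) k ρ = f (leadingMinor A k ρ) :=
  (f.map_det _).symm

theorem borderedMinor_map {R' : Type*} [CommRing R'] (f : R →+* R') (A : Matrix (Fin n) (Fin m) R)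
    (k : Fin m) (ρ : Fin k → Fin n) (i : Fin n) :
    borderedMinor (A.map f) k ρ i = f (borderedMinor A k ρ i) :=
  (f.map_det _).symm

theorem leadingMinor_congr {A A' : Matrix (Fin n) (Fin m) R} {k : Fin m} {ρ : Fin k → Fin n}
    (h : ∀ i, ∀ j < k, A i j = A' i j) : leadingMinor A k ρ = leadingMinor A' k ρ := by
  unfold leadingMinor
  congr 1
  ext i j
  exact h _ _ j.isLt

theorem borderedMinor_sub_congr {A A' : Matrix (Fin n) (Fin m) R} {k : Fin m}
    {ρ : Fin k → Fin n} {i : Fin n}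
    (h : ∀ r c, c < k ∨ r ∈ Set.range ρ → A r c = A' r c) :
    borderedMinor A k ρ i - leadingMinor A k ρ * A i k =
      borderedMinor A' k ρ i - leadingMinor A' k ρ * A' i k := by
  have expand (D : Matrix (Fin n) (Fin m) R) :
      borderedMinor D k ρ i - leadingMinor D k ρ * D i k =
        let E := D.submatrix (Fin.snoc ρ i : Fin (k + 1) → Fin n) (Fin.castLE k.isLt)
        E.det - (E.submatrix Fin.castSucc Fin.castSucc).det * E (Fin.last k) (Fin.last k) := by
    simp only [borderedMinor, leadingMinor, Matrix.submatrix_submatrix, Matrix.submatrix_apply,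
      Fin.snoc_comp_castSucc, Fin.snoc_last]
    rfl
  rw [expand, expand]
  refine det_sub_minor_mul_corner_congr fun r c hrc => h _ _ ?_
  induction r using Fin.lastCases with
  | last => exact .inl (Fin.val_lt_last fun hc => hrc ⟨rfl, hc⟩)
  | cast r => exact .inr ⟨r, by simp⟩

theorem exists_leadingMinor_ne_zero_and_borderedMinor_eq_zero {K : Type*} [Field K] (hmn : m < n)
    {A : Matrix (Fin n) (Fin m) K} (h : ¬ LinearIndependent K A.col) :
    ∃ (k : Fin m) (σ : Fin (k + 2) ↪ Fin n), leadingMinor A k (σ ∘ Fin.castAdd 2) ≠ 0 ∧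
      ∀ i, borderedMinor A k (σ ∘ Fin.castAdd 2) i = 0 := by
  obtain ⟨k, hk, hk'⟩ := exists_linearIndependent_initial_segment h
  obtain ⟨ρ, hmono, hρ⟩ := (linearIndependent_col_iff_exists_det_ne_zero
    (A := A.submatrix id (Fin.castLE k.isLt.le))).1 hk
  obtain ⟨σ, hσ⟩ := Fin.Embedding.restrictSurjective_of_add_le_natCard (m := k) (n := 2)
    (by rw [Nat.card_fin]; omega) ⟨ρ, hmono.injective⟩
  obtain rfl : σ ∘ Fin.castAdd 2 = ρ := congrArg DFunLike.coe hσ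
  refine ⟨k, σ, hρ, fun i => ?_⟩
  by_contra hi
  exact hk' (linearIndependent_col_of_det_submatrix_ne_zero
    (A := A.submatrix id (Fin.castLE k.isLt)) hi)

end Minors

section Density

open Topology Finset

variable {ι : Type*} [Fintype ι] [DecidableEq ι] {S S' : Set (ι → ℤ)} {z : ι → ℤ} {B : ℕ}

/-- The half-open box of lattice points of side `2B` centered at `z`. -/
noncomputable def cube (z : ι → ℤ) (B : ℕ) : Finset (ι → ℤ) :=
  Fintype.piFinset fun i => Ico (z i - B) (z i + B)

theorem card_cube (z : ι → ℤ) (B : ℕ) : #(cube z B) = (2 * B) ^ Fintype.card ι := by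
  have hside (i : ι) : #(Ico (z i - B) (z i + B)) = 2 * B := by
    rw [Int.card_Ico]
    omega
  simp [cube, hside]

theorem mem_cube {x : ι → ℤ} : x ∈ cube z B ↔ ∀ i, x i ∈ Ico (z i - B) (z i + B) :=
  Fintype.mem_piFinset

theorem update_mem_cube {x : ι → ℤ} (hx : x ∈ cube z B) {i : ι} {s : ℤ}
    (hs : s ∈ Ico (z i - B) (z i + B)) : Function.update x i s ∈ cube z B :=
  mem_cube.2 fun j => by
    rcases eq_or_ne j i with rfl | hj
    · simpa using hs
    · simpa [hj] using mem_cube.1 hx j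

open scoped Classical in
/-- The proportion of points of `cube z B` lying in `S`; it is `0` for `B = 0` unless `ι` is
empty. -/
noncomputable def cubeProportion (S : Set (ι → ℤ)) (z : ι → ℤ) (B : ℕ) : ℝ :=
  #{x ∈ cube z B | x ∈ S} / (2 * B) ^ Fintype.card ι

/-- Natural density along cubes of arbitrary center, the analogue of `HasMatDensity` for an
arbitrary finite index type. -/
def HasDensity (S : Set (ι → ℤ)) (δ : ℝ) : Prop :=
  ∀ z : ι → ℤ, Tendsto (cubeProportion S z) atTop (𝓝 δ)

theorem cubeProportion_mono (h : S ⊆ S') (z : ι → ℤ) (B : ℕ) :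
    cubeProportion S z B ≤ cubeProportion S' z B := by
  unfold cubeProportion
  gcongr

theorem cubeProportion_union_le (S S' : Set (ι → ℤ)) (z : ι → ℤ) (B : ℕ) :
    cubeProportion (S ∪ S') z B ≤ cubeProportion S z B + cubeProportion S' z B := by
  classical
  simp only [cubeProportion, ← add_div, Set.mem_union, filter_or]
  gcongr
  exact_mod_cast card_union_le _ _

theorem cubeProportion_iUnion_le {κ : Type*} [Fintype κ] (S : κ → Set (ι → ℤ)) (z : ι → ℤ)
    (B : ℕ) : cubeProportion (⋃ k, S k) z B ≤ ∑ k, cubeProportion (S k) z B := by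
  classical
  simp only [cubeProportion, ← sum_div]
  gcongr
  norm_cast
  refine (card_le_card fun x hx => ?_).trans card_biUnion_le
  simpa using hx

open scoped Classical in
theorem card_filter_cube_mul_card_eq_sum_card_update (S : Set (ι → ℤ)) (z : ι → ℤ) (B : ℕ)
    {a b : ι} (hab : a ≠ b) :
    #{x ∈ cube z B | x ∈ S} * #(Ico (z a - B) (z a + B) ×ˢ Ico (z b - B) (z b + B)) =
      ∑ x ∈ cube z B, #{q ∈ Ico (z a - B) (z a + B) ×ˢ Ico (z b - B) (z b + B) |
        Function.update (Function.update x a q.1) b q.2 ∈ S} := by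
  set Q := Ico (z a - B) (z a + B) ×ˢ Ico (z b - B) (z b + B)
  -- Exchanging the coordinates `a, b` of `x` with `q` is an involution of `cube z B ×ˢ Q`.
  let swap (y : (ι → ℤ) × (ℤ × ℤ)) : (ι → ℤ) × (ℤ × ℤ) :=
    (Function.update (Function.update y.1 a y.2.1) b y.2.2, (y.1 a, y.1 b))
  have hinvol (y) : swap (swap y) = y := by
    ext i <;> grind [Function.update_apply]
  have hmem (y) (hy : y ∈ cube z B ×ˢ Q) : swap y ∈ cube z B ×ˢ Q := by
    obtain ⟨hx, hq⟩ := mem_product.1 hy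
    have hq' := mem_product.1 hq
    exact mem_product.2 ⟨update_mem_cube (update_mem_cube hx hq'.1) hq'.2,
      mem_product.2 ⟨mem_cube.1 hx a, mem_cube.1 hx b⟩⟩
  have hbij : #({x ∈ cube z B | x ∈ S} ×ˢ Q) = #{y ∈ cube z B ×ˢ Q | (swap y).1 ∈ S} := by
    rw [← filter_product_left]
    refine card_nbij' swap swap (fun y hy => ?_) (fun y hy => ?_) (fun y _ => hinvol y)
      fun y _ => hinvol y
    · rw [mem_coe, mem_filter] at hy ⊢
      exact ⟨hmem y hy.1, (hinvol y).symm ▸ hy.2⟩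
    · rw [mem_coe, mem_filter] at hy ⊢
      exact ⟨hmem y hy.1, hy.2⟩
  rw [← card_product, hbij]
  simp only [card_filter, sum_product, swap]

open scoped Classical in
theorem cubeProportion_le_of_forall_fiber_le {a b : ι} (hab : a ≠ b) (hB : 0 < B) {c : ℝ}
    (h : ∀ x ∈ cube z B, (#{q ∈ Ico (z a - B) (z a + B) ×ˢ Ico (z b - B) (z b + B) |
      Function.update (Function.update x a q.1) b q.2 ∈ S} : ℝ) ≤ c * (2 * B) ^ 2) :
    cubeProportion S z B ≤ c := by
  have hside (u : ℤ) : #(Ico (u - B) (u + B)) = 2 * B := by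
    rw [Int.card_Ico]
    omega
  have hswap := card_filter_cube_mul_card_eq_sum_card_update S z B hab
  rw [card_product, hside, hside, ← sq] at hswap
  have hpos : (0 : ℝ) < (2 * B) ^ 2 := by positivity
  rw [cubeProportion, div_le_iff₀ (by positivity), ← mul_le_mul_iff_left₀ hpos]
  calc (#{x ∈ cube z B | x ∈ S} : ℝ) * (2 * B) ^ 2
    _ = ∑ x ∈ cube z B, (#{q ∈ Ico (z a - B) (z a + B) ×ˢ Ico (z b - B) (z b + B) |
          Function.update (Function.update x a q.1) b q.2 ∈ S} : ℝ) := by exact_mod_cast hswap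
    _ ≤ ∑ _x ∈ cube z B, c * (2 * B) ^ 2 := sum_le_sum h
    _ = c * (2 * B) ^ Fintype.card ι * (2 * B) ^ 2 := by
        rw [sum_const, card_cube]
        push_cast [nsmul_eq_mul]
        ring

theorem HasDensity.of_tendsto {A E : ℕ → Set (ι → ℤ)} {d c : ℕ → ℝ} {δ : ℝ}
    (hsub : ∀ T, S ⊆ A T) (hdiff : ∀ T, A T ⊆ S ∪ E T) (hA : ∀ T, HasDensity (A T) (d T))
    (hE : ∀ z T, ∀ᶠ B in atTop, cubeProportion (E T) z B ≤ c T)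
    (hd : Tendsto d atTop (𝓝 δ)) (hc : Tendsto c atTop (𝓝 0)) : HasDensity S δ := by
  refine fun z => tendsto_order.2 ⟨fun u hu => ?_, fun u hu => ?_⟩
  · have hdc : Tendsto (fun T => d T - c T) atTop (𝓝 δ) := by simpa using hd.sub hc
    obtain ⟨T, hT⟩ := (hdc.eventually_const_lt hu).exists
    filter_upwards [(hA T z).eventually_const_lt (lt_sub_iff_add_lt.1 hT), hE z T] with B h₁ h₂
    linarith [(cubeProportion_mono (hdiff T) z B).trans (cubeProportion_union_le S (E T) z B)]
  · obtain ⟨T, hT⟩ := (hd.eventually_lt_const hu).exists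
    filter_upwards [(hA T z).eventually_lt_const hT] with B hB
    exact (cubeProportion_mono (hsub T) z B).trans_lt hB

end Density

section Periodic

open Topology Finset

theorem abs_card_Ico_modEq_sub_le {a b r : ℤ} (hr : 0 < r) (hab : a ≤ b) (v : ℤ) :
    |(#{t ∈ Ico a b | t ≡ v [ZMOD r]} : ℝ) - (b - a) / r| ≤ 1 := by
  have hceil : ⌈(a - v) / (r : ℚ)⌉ ≤ ⌈(b - v) / (r : ℚ)⌉ := by gcongr
  have hcard : (#{t ∈ Ico a b | t ≡ v [ZMOD r]} : ℤ) =
      ⌈(b - v) / (r : ℚ)⌉ - ⌈(a - v) / (r : ℚ)⌉ := by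
    rw [Int.Ico_filter_modEq_card a b hr, max_eq_left (sub_nonneg.2 hceil)]
  have hcardQ : (#{t ∈ Ico a b | t ≡ v [ZMOD r]} : ℚ) =
      ⌈(b - v) / (r : ℚ)⌉ - ⌈(a - v) / (r : ℚ)⌉ := by exact_mod_cast hcard
  have h : |(#{t ∈ Ico a b | t ≡ v [ZMOD r]} : ℚ) - (b - a) / r| ≤ 1 := by
    have hsplit : ((b : ℚ) - a) / r = (b - v) / r - (a - v) / r := by ring
    rw [hcardQ, hsplit, abs_le]
    constructor <;> linarith [Int.le_ceil ((b - v) / (r : ℚ)), Int.le_ceil ((a - v) / (r : ℚ)),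
      Int.ceil_lt_add_one ((b - v) / (r : ℚ)), Int.ceil_lt_add_one ((a - v) / (r : ℚ))]
  exact_mod_cast h

theorem tendsto_card_Ico_intCast_eq_div (N : ℕ) [NeZero N] (a : ℤ) (y : ZMod N) :
    Tendsto (fun B : ℕ => (#{t ∈ Ico (a - B) (a + B) | ((t : ℤ) : ZMod N) = y} : ℝ) / (2 * B)) atTop
      (𝓝 (1 / N)) := by
  obtain ⟨v, rfl⟩ := ZMod.intCast_surjective y
  simp_rw [ZMod.intCast_eq_intCast_iff]
  have hN : (0 : ℤ) < N := by exact_mod_cast NeZero.pos N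
  have hinv : Tendsto (fun B : ℕ => 1 / (2 * B : ℝ)) atTop (𝓝 0) :=
    tendsto_const_nhds.div_atTop (tendsto_natCast_atTop_atTop.const_mul_atTop two_pos)
  rw [← tendsto_sub_nhds_zero_iff]
  refine squeeze_zero_norm' ?_ hinv
  filter_upwards [eventually_gt_atTop 0] with B hB
  have hB' : (0 : ℝ) < 2 * B := by positivity
  have hscale : (#{t ∈ Ico (a - B) (a + B) | t ≡ v [ZMOD N]} : ℝ) / (2 * B) - 1 / N =
      (#{t ∈ Ico (a - B) (a + B) | t ≡ v [ZMOD N]} -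
        (((a + B : ℤ) : ℝ) - (a - B : ℤ)) / (N : ℤ)) / (2 * B) := by
    push_cast
    field_simp
    ring
  rw [hscale, norm_div, Real.norm_of_nonneg hB'.le]
  gcongr
  exact abs_card_Ico_modEq_sub_le hN (by omega) v

variable {ι : Type*} [Fintype ι] [DecidableEq ι]

theorem hasDensity_setOf_intCast_mem {N : ℕ} [NeZero N] (R : Finset (ι → ZMod N)) :
    HasDensity {x : ι → ℤ | (fun i => (x i : ZMod N)) ∈ R} (#R / N ^ Fintype.card ι) := by
  intro z
  have hprop (B : ℕ) : cubeProportion {x : ι → ℤ | (fun i => (x i : ZMod N)) ∈ R} z B =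
      ∑ y ∈ R, ∏ i, (#{t ∈ Ico (z i - B) (z i + B) | ((t : ℤ) : ZMod N) = y i} : ℝ) / (2 * B) := by
    classical
    simp only [cubeProportion, Set.mem_ofPred_eq, prod_div_distrib, prod_const, ← sum_div,
      card_univ]
    congr 1
    norm_cast
    refine (card_eq_sum_card_fiberwise (f := fun (x : ι → ℤ) i => (x i : ZMod N)) (t := R)
      fun x hx => (Finset.mem_filter.1 hx).2).trans (sum_congr rfl fun y hy => ?_)
    rw [← Fintype.card_piFinset]
    congr 1
    ext x
    simp only [mem_filter, mem_cube, Fintype.mem_piFinset, funext_iff, forall_and]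
    refine ⟨fun h => ⟨h.1.1, h.2⟩, fun h => ⟨⟨h.1, ?_⟩, h.2⟩⟩
    rwa [funext h.2]
  have hlim : (#R : ℝ) / N ^ Fintype.card ι = ∑ _y ∈ R, ∏ _i : ι, 1 / (N : ℝ) := by
    simp [div_eq_mul_inv]
  simp_rw [funext hprop, hlim]
  exact tendsto_finsetSum _ fun y _ => tendsto_finsetProd _ fun i _ =>
    tendsto_card_Ico_intCast_eq_div N (z i) (y i)

theorem hasDensity_setOf_forall_intCast_mem {κ : Type*} [Fintype κ] {N : κ → ℕ}
    [∀ k, NeZero (N k)] (hN : Pairwise (Function.onFun Nat.Coprime N))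
    (R : ∀ k, Finset (ι → ZMod (N k))) :
    HasDensity {x : ι → ℤ | ∀ k, (fun i => (x i : ZMod (N k))) ∈ R k}
      (∏ k, (#(R k) : ℝ) / N k ^ Fintype.card ι) := by
  classical
  let e : (ι → ZMod (∏ k, N k)) ≃ ∀ k, ι → ZMod (N k) :=
    (Equiv.piCongrRight fun _ => (ZMod.prodEquivPi N hN).toEquiv).trans (Equiv.piComm _)
  have he (x : ι → ℤ) (k : κ) :
      e (fun i => (x i : ZMod (∏ k, N k))) k = fun i => (x i : ZMod (N k)) := by
    funext i
    simp [e, Function.swap]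
  have : NeZero (∏ k, N k) := ⟨prod_ne_zero_iff.2 fun k _ => NeZero.ne _⟩
  convert hasDensity_setOf_intCast_mem ((Fintype.piFinset R).map e.symm.toEmbedding) using 1
  · ext x
    simp [← he, Fintype.mem_piFinset]
  · simp [Fintype.card_piFinset, prod_div_distrib, prod_pow]

theorem hasDensity_setOf_forall_prime_intCast_mem {R : ∀ p : ℕ, Set (ι → ZMod p)} {c : ℕ → ℝ}
    {δ : ℝ} (hR : Tendsto (fun T : ℕ => ∏ p ∈ T.primesLE, ((R p).ncard : ℝ) / p ^ Fintype.card ι)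
      atTop (𝓝 δ))
    (htail : ∀ z T, ∀ᶠ B in atTop, cubeProportion
      {x : ι → ℤ | ∃ p : ℕ, p.Prime ∧ T < p ∧ (fun i => (x i : ZMod p)) ∉ R p} z B ≤ c T)
    (hc : Tendsto c atTop (𝓝 0)) :
    HasDensity {x : ι → ℤ | ∀ p : ℕ, p.Prime → (fun i => (x i : ZMod p)) ∈ R p} δ := by
  classical
  refine HasDensity.of_tendsto
    (A := fun T => {x | ∀ p ∈ T.primesLE, (fun i => (x i : ZMod p)) ∈ R p})
    (fun T x hx p hp => hx p (Nat.prime_of_mem_primesLE hp)) (fun T x hx => ?_) (fun T => ?_)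
    htail hR hc
  · by_cases hbad : ∃ p : ℕ, p.Prime ∧ T < p ∧ (fun i => (x i : ZMod p)) ∉ R p
    · exact .inr hbad
    · push Not at hbad
      exact .inl fun p hp => (le_or_gt p T).elim
        (fun hpT => hx p (Nat.mem_primesLE.2 ⟨hpT, hp⟩)) (hbad p hp)
  · have hprime (p : T.primesLE) : Nat.Prime p := Nat.prime_of_mem_primesLE p.2
    have (p : T.primesLE) : NeZero (p : ℕ) := ⟨(hprime p).ne_zero⟩
    have hcoprime : Pairwise (Function.onFun Nat.Coprime fun p : T.primesLE => (p : ℕ)) :=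
      fun p q hpq => (Nat.coprime_primes (hprime p) (hprime q)).2 (Subtype.coe_ne_coe.2 hpq)
    convert hasDensity_setOf_forall_intCast_mem hcoprime fun p => (R p).toFinset using 1
    · ext x
      simp
    · simp only [← Set.ncard_eq_toFinset_card']
      exact (prod_coe_sort _ _).symm

end Periodic

section Sieve

open Finset

/-- `p` is a prime dividing `u` and `v` but not `M`. -/
def IsCommonPrimeAwayFrom (M u v : ℤ) (p : ℕ) : Prop :=
  p.Prime ∧ ¬ (p : ℤ) ∣ M ∧ (p : ℤ) ∣ u ∧ (p : ℤ) ∣ v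

theorem card_Ico_dvd_affine_le {M : ℤ} {p : ℕ} (hp : p.Prime) (hM : ¬ (p : ℤ) ∣ M) (f a : ℤ)
    (N : ℕ) : #{t ∈ Ico a (a + N) | (p : ℤ) ∣ M * t + f} ≤ N / p + 1 := by
  obtain hempty | ⟨v, hv⟩ := {t ∈ Ico a (a + N) | (p : ℤ) ∣ M * t + f}.eq_empty_or_nonempty
  · simp [hempty]
  have hsub : {t ∈ Ico a (a + N) | (p : ℤ) ∣ M * t + f} ⊆
      {t ∈ Ico a (a + N) | t ≡ v [ZMOD p]} := by
    refine monotone_filter_right _ fun t _ ht => ?_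
    have hdvd : (p : ℤ) ∣ M * (v - t) := by
      have hsub : M * (v - t) = (M * v + f) - (M * t + f) := by ring
      rw [hsub]
      exact dvd_sub (mem_filter.1 hv).2 ht
    exact Int.modEq_iff_dvd.2 (((Nat.prime_iff_prime_int.1 hp).dvd_or_dvd hdvd).resolve_left hM)
  have hcard : (#{t ∈ Ico a (a + N) | t ≡ v [ZMOD p]} : ℝ) ≤ N / p + 1 := by
    have h := (abs_le.1 <| abs_card_Ico_modEq_sub_le (r := p) (by exact_mod_cast hp.pos)
      (by omega : a ≤ a + N) v).2
    push_cast at h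
    rw [add_sub_cancel_left] at h
    linarith
  refine (card_le_card hsub).trans ?_
  rw [← Nat.floor_div_eq_div (K := ℝ), ← Nat.floor_add_one (by positivity)]
  exact Nat.le_floor hcard

theorem card_primeFactors_gt_le {D N K : ℕ} (hD : D ≠ 0) (h : D < N ^ K) :
    #{p ∈ D.primeFactors | N < p} ≤ K := by
  by_contra! hK
  have hN : 0 < N := by
    refine Nat.pos_of_ne_zero ?_
    rintro rfl
    have hpow : 0 ^ K ≤ 1 := zero_pow_le_one K
    omega
  refine h.not_ge ?_
  calc N ^ K ≤ N ^ #{p ∈ D.primeFactors | N < p} := Nat.pow_le_pow_right hN hK.le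
    _ ≤ ∏ p ∈ D.primeFactors with N < p, p :=
        pow_card_le_prod _ _ _ fun p hp => (mem_filter.1 hp).2.le
    _ ≤ ∏ p ∈ D.primeFactors, p := prod_le_prod_of_subset_of_one_le' (filter_subset _ _)
        fun p hp _ => (Nat.prime_of_mem_primeFactors hp).one_le
    _ ≤ D := Nat.le_of_dvd (Nat.pos_of_ne_zero hD) (Nat.prod_primeFactors_dvd D)

open scoped Classical in
theorem card_isCommonPrimeAwayFrom_le (M f g a b : ℤ) {N p : ℕ} (hpN : p ≤ N) :
    (#{q ∈ Ico a (a + N) ×ˢ Ico b (b + N) |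
      IsCommonPrimeAwayFrom M (M * q.1 + f) (M * q.2 + g) p} : ℝ) ≤
      4 * N ^ 2 * ((p : ℝ) ^ 2)⁻¹ := by
  by_cases hpM : p.Prime ∧ ¬ (p : ℤ) ∣ M
  · have hside : ((N / p + 1 : ℕ) : ℝ) ≤ 2 * (N / p) := by
      have hone : (1 : ℝ) ≤ N / p := by
        rw [one_le_div (by exact_mod_cast hpM.1.pos)]
        exact_mod_cast hpN
      push_cast
      linarith [Nat.cast_div_le (α := ℝ) (m := N) (n := p)]
    have hprod : #{q ∈ Ico a (a + N) ×ˢ Ico b (b + N) |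
        IsCommonPrimeAwayFrom M (M * q.1 + f) (M * q.2 + g) p} ≤ (N / p + 1) * (N / p + 1) := by
      refine (card_le_card fun q hq => ?_).trans <| (card_product _ _).trans_le <|
        Nat.mul_le_mul (card_Ico_dvd_affine_le hpM.1 hpM.2 f a N)
          (card_Ico_dvd_affine_le hpM.1 hpM.2 g b N)
      obtain ⟨hqI, -, -, hf, hg⟩ := mem_filter.1 hq
      exact mem_product.2 ⟨mem_filter.2 ⟨(mem_product.1 hqI).1, hf⟩,
        mem_filter.2 ⟨(mem_product.1 hqI).2, hg⟩⟩
    calc _ ≤ ((N / p + 1 : ℕ) * (N / p + 1 : ℕ) : ℝ) := by exact_mod_cast hprod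
      _ ≤ 2 * (N / p) * (2 * (N / p)) := by gcongr
      _ = 4 * N ^ 2 * ((p : ℝ) ^ 2)⁻¹ := by ring
  · rw [filter_false_of_mem fun q _ hq => hpM ⟨hq.1, hq.2.1⟩, card_empty, Nat.cast_zero]
    positivity

open scoped Classical in
theorem card_exists_isCommonPrimeAwayFrom_le_of_le (M f g a b : ℤ) (N T : ℕ) :
    (#{q ∈ Ico a (a + N) ×ˢ Ico b (b + N) | ∃ p, T < p ∧ p ≤ N ∧
      IsCommonPrimeAwayFrom M (M * q.1 + f) (M * q.2 + g) p} : ℝ) ≤ 8 / (T + 1) * N ^ 2 := by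
  set S : ℕ → Finset (ℤ × ℤ) := fun p =>
    {q ∈ Ico a (a + N) ×ˢ Ico b (b + N) | IsCommonPrimeAwayFrom M (M * q.1 + f) (M * q.2 + g) p}
  have hcover : {q ∈ Ico a (a + N) ×ˢ Ico b (b + N) | ∃ p, T < p ∧ p ≤ N ∧
      IsCommonPrimeAwayFrom M (M * q.1 + f) (M * q.2 + g) p} ⊆ (Ioo T (N + 1)).biUnion S := by
    intro q hq
    obtain ⟨hqI, p, hTp, hpN, hp⟩ := mem_filter.1 hq
    exact mem_biUnion.2 ⟨p, mem_Ioo.2 ⟨hTp, Nat.lt_succ_of_le hpN⟩, mem_filter.2 ⟨hqI, hp⟩⟩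
  calc _ ≤ (∑ p ∈ Ioo T (N + 1), #(S p) : ℝ) := by
        exact_mod_cast (card_le_card hcover).trans card_biUnion_le
    _ ≤ ∑ p ∈ Ioo T (N + 1), 4 * N ^ 2 * ((p : ℝ) ^ 2)⁻¹ :=
        sum_le_sum fun p hp => card_isCommonPrimeAwayFrom_le M f g a b
          (Nat.le_of_lt_succ (mem_Ioo.1 hp).2)
    _ ≤ 4 * N ^ 2 * (2 / (T + 1)) := by
        rw [← mul_sum]
        gcongr
        exact sum_Ioo_inv_sq_le T (N + 1)
    _ = 8 / (T + 1) * N ^ 2 := by ring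

open scoped Classical in
theorem card_exists_isCommonPrimeAwayFrom_le_of_ne_zero {D : ℤ} {N K : ℕ} (hD : D ≠ 0)
    (hDN : |D| < N ^ K) (M g b : ℤ) :
    #{t ∈ Ico b (b + N) | ∃ p, N < p ∧ IsCommonPrimeAwayFrom M D (M * t + g) p} ≤ K := by
  set J := Ico b (b + N)
  set P := {p ∈ D.natAbs.primeFactors | N < p}
  have hone (p) (hp : p ∈ P) : #{t ∈ J | IsCommonPrimeAwayFrom M D (M * t + g) p} ≤ 1 := by
    by_cases hM : (p : ℤ) ∣ M
    · rw [filter_false_of_mem fun t _ ht => ht.2.1 hM]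
      exact Nat.zero_le 1
    · have hpP := mem_filter.1 hp
      have hle := card_Ico_dvd_affine_le (Nat.prime_of_mem_primeFactors hpP.1) hM g b N
      rw [Nat.div_eq_of_lt hpP.2] at hle
      exact (card_le_card (monotone_filter_right _ fun t _ ht => ht.2.2.2)).trans hle
  calc #{t ∈ J | ∃ p, N < p ∧ IsCommonPrimeAwayFrom M D (M * t + g) p}
      ≤ #(P.biUnion fun p => {t ∈ J | IsCommonPrimeAwayFrom M D (M * t + g) p}) := by
        refine card_le_card fun t ht => ?_
        obtain ⟨htJ, p, hNp, hp⟩ := mem_filter.1 ht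
        have hpD := Nat.mem_primeFactors.2
          ⟨hp.1, Int.natCast_dvd.1 hp.2.2.1, Int.natAbs_ne_zero.2 hD⟩
        exact mem_biUnion.2 ⟨p, mem_filter.2 ⟨hpD, hNp⟩, mem_filter.2 ⟨htJ, hp⟩⟩
    _ ≤ #P * 1 := card_biUnion_le_card_mul _ _ _ hone
    _ ≤ K := by
        rw [mul_one]
        refine card_primeFactors_gt_le (Int.natAbs_ne_zero.2 hD) ?_
        zify
        exact hDN

open scoped Classical in
theorem card_exists_isCommonPrimeAwayFrom_le_of_gt {M f a : ℤ} {N K : ℕ} (g b : ℤ)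
    (h : ∀ s ∈ Ico a (a + N), |M * s + f| < N ^ K) :
    #{q ∈ Ico a (a + N) ×ˢ Ico b (b + N) | ∃ p, N < p ∧
      IsCommonPrimeAwayFrom M (M * q.1 + f) (M * q.2 + g) p} ≤ (K + 1) * N := by
  set I := Ico a (a + N) with hI
  set J := Ico b (b + N) with hJ
  have hcardI : #I = N := by simp [hI]
  have hcardJ : #J = N := by simp [hJ]
  rcases eq_or_ne M 0 with rfl | hM
  · simp [IsCommonPrimeAwayFrom]
  have hzero : #{s ∈ I | M * s + f = 0} ≤ 1 :=
    card_le_one.2 fun s hs t ht => mul_left_cancel₀ hM <| add_right_cancel <|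
      (mem_filter.1 hs).2.trans (mem_filter.1 ht).2.symm
  calc #{q ∈ I ×ˢ J | ∃ p, N < p ∧ IsCommonPrimeAwayFrom M (M * q.1 + f) (M * q.2 + g) p}
      = ∑ s ∈ I, #{t ∈ J | ∃ p, N < p ∧
          IsCommonPrimeAwayFrom M (M * s + f) (M * t + g) p} := by
        simp only [card_filter, sum_product]
    _ ≤ ∑ s ∈ I, (K + if M * s + f = 0 then N else 0) := by
        refine sum_le_sum fun s hs => ?_
        split_ifs with hs0
        · exact le_add_left ((card_filter_le _ _).trans hcardJ.le)
        · exact card_exists_isCommonPrimeAwayFrom_le_of_ne_zero hs0 (h s hs) M g b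
    _ = N * K + #{s ∈ I | M * s + f = 0} * N := by
        rw [sum_add_distrib, sum_const, hcardI, smul_eq_mul, ← sum_filter, sum_const, smul_eq_mul]
    _ ≤ N * K + 1 * N := by gcongr
    _ = (K + 1) * N := by ring

open scoped Classical in
theorem card_exists_isCommonPrimeAwayFrom_le {M f a : ℤ} {N K T : ℕ} (g b : ℤ)
    (h : ∀ s ∈ Ico a (a + N), |M * s + f| < N ^ K) (hN : (K + 1) * (T + 1) ≤ N) :
    (#{q ∈ Ico a (a + N) ×ˢ Ico b (b + N) | ∃ p, T < p ∧
      IsCommonPrimeAwayFrom M (M * q.1 + f) (M * q.2 + g) p} : ℝ) ≤ 9 / (T + 1) * N ^ 2 := by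
  have hlarge : ((K + 1) * N : ℝ) ≤ 1 / (T + 1) * N ^ 2 := by
    have hN' : ((K + 1) * (T + 1) : ℝ) ≤ N := by exact_mod_cast hN
    calc ((K + 1) * N : ℝ) = 1 / (T + 1) * (((K + 1) * (T + 1)) * N) := by field_simp
      _ ≤ 1 / (T + 1) * (N * N) := by gcongr
      _ = 1 / (T + 1) * N ^ 2 := by rw [sq]
  have hsplit : {q ∈ Ico a (a + N) ×ˢ Ico b (b + N) | ∃ p, T < p ∧
      IsCommonPrimeAwayFrom M (M * q.1 + f) (M * q.2 + g) p} ⊆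
      {q ∈ Ico a (a + N) ×ˢ Ico b (b + N) | ∃ p, T < p ∧ p ≤ N ∧
        IsCommonPrimeAwayFrom M (M * q.1 + f) (M * q.2 + g) p} ∪
      {q ∈ Ico a (a + N) ×ˢ Ico b (b + N) | ∃ p, N < p ∧
        IsCommonPrimeAwayFrom M (M * q.1 + f) (M * q.2 + g) p} := by
    rw [← filter_or]
    refine monotone_filter_right _ fun q _ ⟨p, hTp, hp⟩ => ?_
    exact (le_or_gt p N).imp (fun hpN => ⟨p, hTp, hpN, hp⟩) fun hNp => ⟨p, hNp, hp⟩
  calc _ ≤ (#{q ∈ Ico a (a + N) ×ˢ Ico b (b + N) | ∃ p, T < p ∧ p ≤ N ∧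
          IsCommonPrimeAwayFrom M (M * q.1 + f) (M * q.2 + g) p} : ℝ) +
        #{q ∈ Ico a (a + N) ×ˢ Ico b (b + N) | ∃ p, N < p ∧
          IsCommonPrimeAwayFrom M (M * q.1 + f) (M * q.2 + g) p} := by
        exact_mod_cast (card_le_card hsplit).trans (card_union_le _ _)
    _ ≤ 8 / (T + 1) * N ^ 2 + (K + 1) * N :=
        add_le_add (card_exists_isCommonPrimeAwayFrom_le_of_le M f g a b N T)
          (by exact_mod_cast card_exists_isCommonPrimeAwayFrom_le_of_gt g b h)
    _ ≤ 8 / (T + 1) * N ^ 2 + 1 / (T + 1) * N ^ 2 := by gcongr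
    _ = 9 / (T + 1) * N ^ 2 := by ring

theorem cubeProportion_exists_isCommonPrimeAwayFrom_le {ι : Type*} [Fintype ι] [DecidableEq ι]
    {M F G : (ι → ℤ) → ℤ} {a b : ι} {z : ι → ℤ} {B K T : ℕ} (hab : a ≠ b)
    (hM : DependsOn M {a, b}ᶜ) (hF : DependsOn (fun x => F x - M x * x a) {a, b}ᶜ)
    (hG : DependsOn (fun x => G x - M x * x b) {a, b}ᶜ)
    (hbound : ∀ x ∈ cube z B, |F x| < (2 * B) ^ K) (hB : (K + 1) * (T + 1) ≤ 2 * B) :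
    cubeProportion {x | ∃ p, T < p ∧ IsCommonPrimeAwayFrom (M x) (F x) (G x) p} z B ≤
      9 / (T + 1) := by
  classical
  have hpos : 0 < 2 * B := (Nat.mul_pos K.succ_pos T.succ_pos).trans_le hB
  refine cubeProportion_le_of_forall_fiber_le hab (by omega) fun x hx => ?_
  have hMx {x'} (h : ∀ i ∈ ({a, b}ᶜ : Set ι), x' i = x i) : M x' = M x := hM h
  have hFx {x'} (h : ∀ i ∈ ({a, b}ᶜ : Set ι), x' i = x i) :
      F x' = M x * x' a + (F x - M x * x a) := by
    linear_combination hF h + x' a * hMx h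
  have hGx {x'} (h : ∀ i ∈ ({a, b}ᶜ : Set ι), x' i = x i) :
      G x' = M x * x' b + (G x - M x * x b) := by
    linear_combination hG h + x' b * hMx h
  have hside (u : ℤ) : Ico (u - B) (u + B) = Ico (u - B) (u - B + (2 * B : ℕ)) := by
    congr 1
    push_cast
    ring
  have hbound' (s) (hs : s ∈ Ico (z a - B) (z a - B + (2 * B : ℕ))) :
      |M x * s + (F x - M x * x a)| < (2 * B : ℕ) ^ K := by
    have hF' := hbound _ (update_mem_cube hx (hside (z a) ▸ hs))
    rw [hFx (by simp +contextual), Function.update_self] at hF'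
    exact_mod_cast hF'
  have hcount := card_exists_isCommonPrimeAwayFrom_le (G x - M x * x b) (z b - B) hbound' hB
  have hagree (q : ℤ × ℤ) : ∀ i ∈ ({a, b}ᶜ : Set ι),
      Function.update (Function.update x a q.1) b q.2 i = x i := by
    simp +contextual
  have hM' (q : ℤ × ℤ) := hMx (hagree q)
  have hF' (q : ℤ × ℤ) := hFx (hagree q)
  have hG' (q : ℤ × ℤ) := hGx (hagree q)
  simpa [hside, hM', hF', hG', hab] using hcount

end Sieve

section MatrixTail

open Finset

variable {n m : ℕ}

/-- The matrix with the given family of entries, identifying `n × m` matrices with vectors indexed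
by `Fin n × Fin m`. -/
def matrixOf {R : Type*} (x : Fin n × Fin m → R) : Matrix (Fin n) (Fin m) R :=
  Matrix.of fun i j => x (i, j)

theorem dependsOn_leadingMinor_matrixOf {R : Type*} [CommRing R] (k : Fin m) (ρ : Fin k → Fin n) :
    DependsOn (fun x : Fin n × Fin m → R => leadingMinor (matrixOf x) k ρ) {q | q.2 < k} :=
  fun _ _ h => leadingMinor_congr fun i j hj => h (i, j) hj

theorem dependsOn_borderedMinor_matrixOf_sub {R : Type*} [CommRing R] (k : Fin m)
    (ρ : Fin k → Fin n) (i : Fin n) :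
    DependsOn (fun x : Fin n × Fin m → R =>
      borderedMinor (matrixOf x) k ρ i - leadingMinor (matrixOf x) k ρ * x (i, k))
      {q | q.2 < k ∨ q.1 ∈ Set.range ρ} :=
  fun _ _ h => borderedMinor_sub_congr fun r c hrc => h (r, c) hrc

theorem exists_isCommonPrimeAwayFrom_of_not_linearIndependent_col (hmn : m < n)
    {A : Matrix (Fin n) (Fin m) ℤ} {p : ℕ} (hp : p.Prime)
    (h : ¬ LinearIndependent (ZMod p) (A.map (Int.cast : ℤ → ZMod p)).col) :
    ∃ (k : Fin m) (σ : Fin (k + 2) ↪ Fin n), IsCommonPrimeAwayFrom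
      (leadingMinor A k (σ ∘ Fin.castAdd 2))
      (borderedMinor A k (σ ∘ Fin.castAdd 2) (σ (Fin.natAdd k 0)))
      (borderedMinor A k (σ ∘ Fin.castAdd 2) (σ (Fin.natAdd k 1))) p := by
  have := Fact.mk hp
  obtain ⟨k, σ, hlead, hbord⟩ := exists_leadingMinor_ne_zero_and_borderedMinor_eq_zero hmn h
  have hdvd (i : Fin n) : (p : ℤ) ∣ borderedMinor A k (σ ∘ Fin.castAdd 2) i :=
    (ZMod.intCast_zmod_eq_zero_iff_dvd _ _).1
      ((borderedMinor_map (Int.castRingHom (ZMod p)) A _ _ _).symm.trans (hbord i))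
  refine ⟨k, σ, hp, fun hM => hlead ?_, hdvd _, hdvd _⟩
  exact (leadingMinor_map (Int.castRingHom (ZMod p)) A _ _).trans
    ((ZMod.intCast_zmod_eq_zero_iff_dvd _ _).2 hM)

theorem eventually_abs_le_of_mem_cube {ι : Type*} [Fintype ι] [DecidableEq ι] (z : ι → ℤ) :
    ∀ᶠ B : ℕ in atTop, ∀ x ∈ cube z B, ∀ i, |x i| ≤ 2 * B := by
  filter_upwards [eventually_all.2 fun i => eventually_ge_atTop (z i).natAbs] with B hB x hx i
  have hxi := mem_Ico.1 (mem_cube.1 hx i)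
  have hzi := hB i
  exact abs_le.2 ⟨by omega, by omega⟩

theorem eventually_abs_borderedMinor_lt (k : Fin m) (ρ : Fin k → Fin n) (i : Fin n)
    (z : Fin n × Fin m → ℤ) : ∀ᶠ B : ℕ in atTop, ∀ x ∈ cube z B,
      |borderedMinor (matrixOf x) k ρ i| < (2 * B) ^ ((k : ℕ) + 2) := by
  filter_upwards [eventually_abs_le_of_mem_cube z, eventually_gt_atTop ((k : ℕ) + 1).factorial]
    with B hB hfac x hx
  have hdet := Matrix.det_le (abv := AbsoluteValue.abs) (x := (2 * B : ℤ))
    (A := (matrixOf x).submatrix (Fin.snoc ρ i : Fin (k + 1) → Fin n) (Fin.castLE k.isLt))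
    fun r c => hB x hx (_, _)
  rw [Fintype.card_fin, nsmul_eq_mul] at hdet
  calc |borderedMinor (matrixOf x) k ρ i|
    _ ≤ ((k : ℕ) + 1).factorial * (2 * B) ^ ((k : ℕ) + 1) := hdet
    _ < 2 * B * (2 * B) ^ ((k : ℕ) + 1) :=
        mul_lt_mul_of_pos_right (by omega) (pow_pos (by omega) _)
    _ = (2 * B) ^ ((k : ℕ) + 2) := by ring

theorem eventually_cubeProportion_borderedMinor_le (k : Fin m) (σ : Fin (k + 2) ↪ Fin n)
    (z : Fin n × Fin m → ℤ) (T : ℕ) :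
    ∀ᶠ B in atTop, cubeProportion {x | ∃ p, T < p ∧ IsCommonPrimeAwayFrom
        (leadingMinor (matrixOf x) k (σ ∘ Fin.castAdd 2))
        (borderedMinor (matrixOf x) k (σ ∘ Fin.castAdd 2) (σ (Fin.natAdd k 0)))
        (borderedMinor (matrixOf x) k (σ ∘ Fin.castAdd 2) (σ (Fin.natAdd k 1))) p} z B ≤
      9 / (T + 1) := by
  set ρ : Fin k → Fin n := σ ∘ Fin.castAdd 2
  set row : Fin 2 → Fin n := fun e => σ (Fin.natAdd k e)
  have hrow (e : Fin 2) : row e ∉ Set.range ρ := by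
    rintro ⟨i, hi⟩
    have := Fin.ext_iff.1 (σ.injective hi)
    simp only [Fin.val_castAdd, Fin.val_natAdd] at this
    omega
  have hcorner {q : Fin n × Fin m} (hq : q.2 < k ∨ q.1 ∈ Set.range ρ) :
      q ∈ ({(row 0, k), (row 1, k)} : Set (Fin n × Fin m))ᶜ := by
    rintro (rfl | rfl)
    exacts [hq.elim (lt_irrefl _) (hrow 0), hq.elim (lt_irrefl _) (hrow 1)]
  filter_upwards [eventually_abs_borderedMinor_lt k ρ (row 0) z,
    eventually_ge_atTop (((k : ℕ) + 2 + 1) * (T + 1))] with B hgrowth hB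
  refine cubeProportion_exists_isCommonPrimeAwayFrom_le (a := (row 0, k)) (b := (row 1, k))
    (by simp [row]) ?_ ?_ ?_ hgrowth (by omega)
  · exact (dependsOn_leadingMinor_matrixOf k ρ).mono fun q hq => hcorner (.inl hq)
  · exact (dependsOn_borderedMinor_matrixOf_sub k ρ (row 0)).mono fun q => hcorner
  · exact (dependsOn_borderedMinor_matrixOf_sub k ρ (row 1)).mono fun q => hcorner

theorem eventually_cubeProportion_not_linearIndependent_col_le (hmn : m < n)
    (z : Fin n × Fin m → ℤ) (T : ℕ) :
    ∀ᶠ B in atTop, cubeProportion {x | ∃ p : ℕ, p.Prime ∧ T < p ∧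
        ¬ LinearIndependent (ZMod p) (matrixOf fun q => (x q : ZMod p)).col} z B ≤
      Fintype.card (Σ k : Fin m, Fin (k + 2) ↪ Fin n) * (9 / (T + 1)) := by
  let bad (s : Σ k : Fin m, Fin (k + 2) ↪ Fin n) : Set (Fin n × Fin m → ℤ) :=
    {x | ∃ p, T < p ∧ IsCommonPrimeAwayFrom
      (leadingMinor (matrixOf x) s.1 (s.2 ∘ Fin.castAdd 2))
      (borderedMinor (matrixOf x) s.1 (s.2 ∘ Fin.castAdd 2) (s.2 (Fin.natAdd s.1 0)))
      (borderedMinor (matrixOf x) s.1 (s.2 ∘ Fin.castAdd 2) (s.2 (Fin.natAdd s.1 1))) p}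
  have hcover : {x : Fin n × Fin m → ℤ | ∃ p : ℕ, p.Prime ∧ T < p ∧
      ¬ LinearIndependent (ZMod p) (matrixOf fun q => (x q : ZMod p)).col} ⊆ ⋃ s, bad s := by
    rintro x ⟨p, hp, hTp, hx⟩
    obtain ⟨k, σ, hσ⟩ := exists_isCommonPrimeAwayFrom_of_not_linearIndependent_col hmn hp hx
    exact Set.mem_iUnion.2 ⟨⟨k, σ⟩, p, hTp, hσ⟩
  filter_upwards [eventually_all.2 fun s : Σ k : Fin m, Fin (k + 2) ↪ Fin n =>
    eventually_cubeProportion_borderedMinor_le s.1 s.2 z T] with B hB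
  calc _ ≤ cubeProportion (⋃ s, bad s) z B := cubeProportion_mono hcover z B
    _ ≤ ∑ s, cubeProportion (bad s) z B := cubeProportion_iUnion_le bad z B
    _ ≤ ∑ _s, 9 / ((T : ℝ) + 1) := sum_le_sum fun s _ => hB s
    _ = _ := by rw [sum_const, card_univ, nsmul_eq_mul]

end MatrixTail

section LinearIndependentDensity

open Topology Finset

theorem ncard_setOf_linearIndependent_col_div {K : Type*} [Field K] [Fintype K] {n m : ℕ}
    (hmn : m ≤ n) :
    ({y : Fin n × Fin m → K | LinearIndependent K (matrixOf y).col}.ncard : ℝ) /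
        (Fintype.card K : ℝ) ^ Fintype.card (Fin n × Fin m) =
      ∏ i : Fin m, (1 - ((Fintype.card K : ℝ) ^ (n - i : ℕ))⁻¹) := by
  let columns : (Fin n × Fin m → K) ≃ (Fin m → Fin n → K) :=
    ((Equiv.prodComm _ _).arrowCongr (.refl K)).trans (Equiv.curry _ _ _)
  have hcard : {y : Fin n × Fin m → K | LinearIndependent K (matrixOf y).col}.ncard =
      ∏ i : Fin m, (Fintype.card K ^ n - Fintype.card K ^ (i : ℕ)) := by
    have h := card_linearIndependent (K := K) (V := Fin n → K) (k := m) (by simpa using hmn)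
    rw [Module.finrank_fin_fun] at h
    exact (Nat.card_congr (columns.subtypeEquiv fun y => Iff.rfl)).trans h
  rw [hcard, Fintype.card_prod, Fintype.card_fin, Fintype.card_fin, pow_mul, Nat.cast_prod,
    ← Fin.prod_const m (_ ^ n), ← prod_div_distrib]
  refine prod_congr rfl fun i _ => ?_
  have hi : (i : ℕ) ≤ n := i.isLt.le.trans hmn
  have hK : (0 : ℝ) < Fintype.card K := by exact_mod_cast Fintype.card_pos
  rw [Nat.cast_sub (Nat.pow_le_pow_right Fintype.card_pos hi), pow_sub₀ _ hK.ne' hi]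
  push_cast
  field_simp

theorem zetaR_eq_riemannZeta {k : ℕ} (hk : 1 < k) : (zetaR k : ℂ) = riemannZeta k := by
  rw [zeta_eq_tsum_one_div_nat_add_one_cpow (by simpa using hk), zetaR]
  push_cast
  simp

theorem tendsto_prod_primesLE_one_sub_inv_pow {k : ℕ} (hk : 1 < k) :
    Tendsto (fun T : ℕ => ∏ p ∈ T.primesLE, (1 - ((p : ℝ) ^ k)⁻¹)) atTop (𝓝 (zetaR k)⁻¹) := by
  have hre : 1 < (k : ℂ).re := by simpa using hk
  have hpartial := (tendsto_add_atTop_iff_nat 1).2 <|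
    (riemannZeta_eulerProduct hre).inv₀ (riemannZeta_ne_zero_of_one_lt_re hre)
  rw [← tendsto_ofReal_iff]
  push_cast
  rw [zetaR_eq_riemannZeta hk]
  refine hpartial.congr fun T => ?_
  rw [← prod_inv_distrib]
  exact prod_congr rfl fun p _ => by rw [inv_inv, Complex.cpow_neg, Complex.cpow_natCast]

theorem tendsto_prod_primesLE_ncard_linearIndependent_col_div {n m : ℕ} (hmn : m < n) :
    Tendsto (fun T : ℕ => ∏ p ∈ T.primesLE,
        ({y : Fin n × Fin m → ZMod p | LinearIndependent (ZMod p) (matrixOf y).col}.ncard : ℝ) /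
          (p : ℝ) ^ Fintype.card (Fin n × Fin m))
      atTop (𝓝 (∏ i : Fin m, zetaR (n - i))⁻¹) := by
  rw [← prod_inv_distrib]
  refine (tendsto_finsetProd univ fun (i : Fin m) _ =>
    tendsto_prod_primesLE_one_sub_inv_pow (k := n - i) (by omega)).congr fun T => ?_
  rw [Finset.prod_comm]
  refine prod_congr rfl fun p hp => ?_
  have := Fact.mk (Nat.mem_primesLE.1 hp).2
  simpa only [ZMod.card] using
    (ncard_setOf_linearIndependent_col_div (K := ZMod p) hmn.le).symm

open scoped Classical in
theorem matCubeCount_eq_card_filter_cube {n m : ℕ} (S : Set (Matrix (Fin n) (Fin m) ℤ))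
    (z : Fin n × Fin m → ℤ) (B : ℕ) :
    matCubeCount S (matrixOf z) B = #{x ∈ cube z B | matrixOf x ∈ S} :=
  card_equiv (Equiv.curry _ _ _).symm fun A => by
    simp only [mem_filter, Fintype.mem_piFinset, mem_cube, Prod.forall]
    rfl

theorem hasMatDensity_iff_hasDensity_matrixOf {n m : ℕ} {S : Set (Matrix (Fin n) (Fin m) ℤ)}
    {δ : ℝ} : HasMatDensity S δ ↔ HasDensity {x : Fin n × Fin m → ℤ | matrixOf x ∈ S} δ := by
  refine ((Equiv.curry (Fin n) (Fin m) ℤ).trans Matrix.of).forall_congr (fun z => ?_) |>.symm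
  refine tendsto_congr fun B => ?_
  rw [cubeProportion, Fintype.card_prod, Fintype.card_fin, Fintype.card_fin]
  exact congrArg (fun N : ℕ => (N : ℝ) / _) (matCubeCount_eq_card_filter_cube S z B).symm

end LinearIndependentDensity

/-- The density of `n × m` rectangular unimodular integer matrices (`n > m`),
i.e. matrices whose `m × m` minors are coprime, is `(ζ(n)⋯ζ(n-m+1))⁻¹`. -/
theorem density_rectangular_unimodular (n m : ℕ) (hm : 1 ≤ m) (hnm : m < n) :
    HasMatDensity
      {A : Matrix (Fin n) (Fin m) ℤ | minorsGcd A (fun l : Fin m => l) = 1}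
      (∏ i : Fin m, zetaR (n - (i : ℕ)))⁻¹ := by
  rw [hasMatDensity_iff_hasDensity_matrixOf]
  have htail : Tendsto (fun T : ℕ =>
      (Fintype.card (Σ k : Fin m, Fin (k + 2) ↪ Fin n) : ℝ) * (9 / ((T : ℝ) + 1)))
      atTop (nhds 0) := by
    simpa [div_eq_mul_inv] using
      (tendsto_one_div_add_atTop_nhds_zero_nat.const_mul (9 : ℝ)).const_mul
        (Fintype.card (Σ k : Fin m, Fin (k + 2) ↪ Fin n) : ℝ)
  have hdensity := hasDensity_setOf_forall_prime_intCast_mem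
    (tendsto_prod_primesLE_ncard_linearIndependent_col_div hnm)
    (eventually_cubeProportion_not_linearIndependent_col_le hnm) htail
  convert hdensity using 1
  ext x
  exact minorsGcd_eq_one_iff
end

section
/- The natural density of n×n integer matrix bases of 'random lattice' type, i.e. matrices whose HNF has all diagonal entries equal to 1 except possibly the last, equals (ζ(n)·ζ(n−1)·...·ζ(2))^{-1}, and as n → ∞ this converges to d = (∏_{j≥2} ζ(j))^{-1} ≈ 0.43575707677. -/
open Filter

/-- `H` is in Hermite normal form with `r` nonzero rows and pivot columns `j`. -/
def IsHNFWith {n m : ℕ} (H : Matrix (Fin n) (Fin m) ℤ) (r : ℕ) (hr : r ≤ n)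
    (j : Fin r → Fin m) : Prop :=
  StrictMono j ∧
  (∀ i : Fin n, r ≤ (i : ℕ) → ∀ l, H i l = 0) ∧
  (∀ i : Fin r, 0 < H (Fin.castLE hr i) (j i)) ∧
  (∀ i : Fin r, ∀ l : Fin m, (l : ℕ) < (j i : ℕ) → H (Fin.castLE hr i) l = 0) ∧
  (∀ i : Fin r, ∀ k : Fin n, (k : ℕ) < (i : ℕ) →
    0 ≤ H k (j i) ∧ H k (j i) < H (Fin.castLE hr i) (j i))

/-- `H` is in Hermite normal form. -/
def IsHNF {n m : ℕ} (H : Matrix (Fin n) (Fin m) ℤ) : Prop :=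
  ∃ (r : ℕ) (hr : r ≤ n) (j : Fin r → Fin m), IsHNFWith H r hr j

/-- A square integer matrix is unimodular if its determinant is `±1`. -/
def IsUnimodular {n : ℕ} (U : Matrix (Fin n) (Fin n) ℤ) : Prop :=
  U.det = 1 ∨ U.det = -1

/-- `H` is the Hermite normal form of `A`: `H` is in HNF and `A = U * H`
for some unimodular `U`. -/
def IsHNFOf {n m : ℕ} (H A : Matrix (Fin n) (Fin m) ℤ) : Prop :=
  IsHNF H ∧ ∃ U : Matrix (Fin n) (Fin n) ℤ, IsUnimodular U ∧ A = U * H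


/-!
The Hermite normal form of `A` has diagonal `1, …, 1, *` exactly when the first `n - 1` columns of
`A` span a saturated sublattice, that is, when they are linearly independent modulo every prime `p`.
Modulo a single `p` this happens with probability `∏ (1 - p ^ (-j))` over `2 ≤ j ≤ n`. By the
Chinese remainder theorem finitely many primes are independent in the limit, and the Euler product
turns the product of the local densities into `(ζ(n) ⋯ ζ(2))⁻¹`.

It remains to show that large primes contribute little. A prime `p ≤ 2B` fails with probability
`O(p ^ (-2))`, so a union bound suffices. For `p > 2B` the residues modulo `p` are not
equidistributed, and one argues by induction on the number of vectors instead: outside a negligible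
set, the square matrix of the first coordinates of the vectors has a nonzero determinant, which has
boundedly many prime factors `p > 2B`. Modulo such a `p` all vectors but one are independent
(induction), so dependence forces the tuple of last coordinates into a fixed hyperplane over
`ZMod p`, which has probability at most `1 / (2B)`.
-/

section Telescoping

variable {f g : ℕ → ℝ}

lemma tsum_le_of_le_sub_succ (hf : ∀ n, 0 ≤ f n) (hg : ∀ n, 0 ≤ g n)
    (hfg : ∀ n, f n ≤ g n - g (n + 1)) : ∑' n, f n ≤ g 0 :=
  Real.tsum_le_of_sum_range_le hf fun m => calc
    ∑ n ∈ Finset.range m, f n ≤ ∑ n ∈ Finset.range m, (g n - g (n + 1)) :=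
      Finset.sum_le_sum fun n _ => hfg n
    _ = g 0 - g m := Finset.sum_range_sub' g m
    _ ≤ g 0 := sub_le_self _ (hg m)

lemma le_tsum_of_sub_succ_le (hf : Summable f) (hg : Tendsto g atTop (nhds 0))
    (hgf : ∀ n, g n - g (n + 1) ≤ f n) : g 0 ≤ ∑' n, f n := by
  have hlim : Tendsto (fun m => g 0 - g m) atTop (nhds (g 0)) := by
    simpa using tendsto_const_nhds.sub hg
  refine le_of_tendsto_of_tendsto' hlim hf.hasSum.tendsto_sum_nat fun m => ?_
  rw [← Finset.sum_range_sub' g]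
  exact Finset.sum_le_sum fun n _ => hgf n

end Telescoping

/-! ### Zeta values -/

section Zeta

variable {k : ℕ}

lemma summable_one_div_succ_pow (hk : 2 ≤ k) :
    Summable fun n : ℕ => (1 : ℝ) / (n + 1 : ℝ) ^ k := by
  simpa using (summable_nat_add_iff 1).2 (Real.summable_one_div_nat_pow.2 hk)

lemma summable_one_div_add_pow (hk : 2 ≤ k) (N : ℕ) :
    Summable fun n : ℕ => (1 : ℝ) / ((n : ℝ) + N + 1) ^ k := by
  simpa using (summable_nat_add_iff N).2 (summable_one_div_succ_pow hk)

lemma zetaR_eq_sum_add_tsum (hk : 2 ≤ k) (N : ℕ) :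
    zetaR k = ∑ n ∈ Finset.range N, (1 : ℝ) / (n + 1 : ℝ) ^ k +
      ∑' n : ℕ, (1 : ℝ) / ((n : ℝ) + N + 1) ^ k := by
  rw [zetaR, ← (summable_one_div_succ_pow hk).sum_add_tsum_nat_add N]
  simp

lemma sum_le_zetaR (hk : 2 ≤ k) (N : ℕ) :
    ∑ n ∈ Finset.range N, (1 : ℝ) / (n + 1 : ℝ) ^ k ≤ zetaR k := by
  rw [zetaR_eq_sum_add_tsum hk N]
  exact le_add_of_nonneg_right (tsum_nonneg fun n => by positivity)

lemma one_div_add_one_pow_le {x c : ℝ} (hc : 0 < c) (hcx : c ≤ x) (j : ℕ) :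
    1 / (x + 1) ^ (j + 2) ≤ 1 / c ^ j * (1 / x - 1 / (x + 1)) := by
  have hx : 0 < x := hc.trans_le hcx
  have hdiff : 1 / x - 1 / (x + 1) = 1 / (x * (x + 1)) := by field_simp; ring
  rw [hdiff, one_div_mul_one_div, pow_add]
  have hpow : c ^ j ≤ (x + 1) ^ j := by gcongr; linarith
  gcongr
  nlinarith

lemma tsum_one_div_add_pow_le (hk : 2 ≤ k) {N : ℕ} (hN : 1 ≤ N) :
    ∑' n : ℕ, (1 : ℝ) / ((n : ℝ) + N + 1) ^ k ≤ 1 / (N : ℝ) ^ (k - 1) := by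
  obtain ⟨j, rfl⟩ := Nat.exists_eq_add_of_le' hk
  have hN0 : (0 : ℝ) < N := by exact_mod_cast hN
  calc ∑' n : ℕ, (1 : ℝ) / ((n : ℝ) + N + 1) ^ (j + 2)
      ≤ 1 / (N : ℝ) ^ j * (1 / (((0 : ℕ) : ℝ) + N)) := by
        refine tsum_le_of_le_sub_succ (g := fun n : ℕ => 1 / (N : ℝ) ^ j * (1 / ((n : ℝ) + N)))
          (fun n => by positivity) (fun n => by positivity) fun n => ?_
        have h := one_div_add_one_pow_le hN0 (le_add_of_nonneg_left n.cast_nonneg) j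
        rw [mul_sub] at h
        rwa [Nat.cast_succ, add_right_comm (n : ℝ) 1]
    _ = 1 / (N : ℝ) ^ (j + 2 - 1) := by
        rw [Nat.cast_zero, zero_add, one_div_mul_one_div, ← pow_succ]; rfl

lemma zetaR_le_sum_add (hk : 2 ≤ k) {N : ℕ} (hN : 1 ≤ N) :
    zetaR k ≤ ∑ n ∈ Finset.range N, (1 : ℝ) / (n + 1 : ℝ) ^ k + 1 / (N : ℝ) ^ (k - 1) := by
  rw [zetaR_eq_sum_add_tsum hk N]
  gcongr
  exact tsum_one_div_add_pow_le hk hN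

lemma one_le_zetaR (hk : 2 ≤ k) : 1 ≤ zetaR k := by
  simpa using sum_le_zetaR hk 1

lemma zetaR_le_one_add (hk : 2 ≤ k) : zetaR k ≤ 1 + 3 * (1 / 2) ^ k := by
  obtain ⟨j, rfl⟩ := Nat.exists_eq_add_of_le' hk
  refine (zetaR_le_sum_add hk (N := 2) (by norm_num)).trans_eq ?_
  rw [Finset.sum_range_succ, Finset.sum_range_one]
  simp only [pow_add, one_div, inv_pow]
  norm_num
  ring

lemma multipliable_zetaR : Multipliable fun j : ℕ => zetaR (j + 2) := by
  have hsummable : Summable fun j : ℕ => zetaR (j + 2) - 1 :=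
    Summable.of_nonneg_of_le (fun j => sub_nonneg.2 (one_le_zetaR (Nat.le_add_left 2 j)))
      (fun j => sub_le_iff_le_add'.2 (zetaR_le_one_add (Nat.le_add_left 2 j)))
      (((summable_nat_add_iff 2).2 summable_geometric_two).mul_left 3)
  simpa using Real.multipliable_one_add_of_summable hsummable

lemma prod_range_le_tprod_zetaR (J : ℕ) :
    ∏ j ∈ Finset.range J, zetaR (j + 2) ≤ ∏' j : ℕ, zetaR (j + 2) := by
  refine ge_of_tendsto multipliable_zetaR.tendsto_prod_tprod_nat ?_
  filter_upwards [eventually_ge_atTop J] with K hK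
  exact Finset.prod_le_prod_of_subset_of_one_le (Finset.range_mono hK)
    (fun j _ => zero_le_one.trans (one_le_zetaR (Nat.le_add_left 2 j)))
    fun j _ _ => one_le_zetaR (Nat.le_add_left 2 j)

lemma tprod_zetaR_pos : 0 < ∏' j : ℕ, zetaR (j + 2) :=
  one_pos.trans_le (prod_range_le_tprod_zetaR 0)

lemma prod_Ico_zetaR_le (J K : ℕ) :
    ∏ j ∈ Finset.Ico J K, zetaR (j + 2) ≤ Real.exp (6 * (1 / 2) ^ (J + 2)) :=
  calc ∏ j ∈ Finset.Ico J K, zetaR (j + 2)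
      ≤ ∏ j ∈ Finset.Ico J K, (1 + 3 * (1 / 2 : ℝ) ^ (j + 2)) :=
        Finset.prod_le_prod (fun j _ => zero_le_one.trans (one_le_zetaR (Nat.le_add_left 2 j)))
          fun j _ => zetaR_le_one_add (Nat.le_add_left 2 j)
    _ ≤ Real.exp (∑ j ∈ Finset.Ico J K, 3 * (1 / 2 : ℝ) ^ (j + 2)) :=
        Real.prod_one_add_le_exp_sum _ fun j => by positivity
    _ = Real.exp (3 / 4 * ∑ j ∈ Finset.Ico J K, (1 / 2 : ℝ) ^ j) := by
        rw [Finset.mul_sum]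
        congr! 2 with j
        ring
    _ ≤ Real.exp (3 / 4 * ((1 / 2) ^ J / (1 - 1 / 2))) := by
        gcongr
        exact geom_sum_Ico_le_of_lt_one (by norm_num) (by norm_num)
    _ = Real.exp (6 * (1 / 2) ^ (J + 2)) := by ring_nf

lemma tprod_zetaR_le (J : ℕ) :
    ∏' j : ℕ, zetaR (j + 2) ≤
      (∏ j ∈ Finset.range J, zetaR (j + 2)) * Real.exp (6 * (1 / 2) ^ (J + 2)) := by
  refine le_of_tendsto multipliable_zetaR.tendsto_prod_tprod_nat ?_
  filter_upwards [eventually_ge_atTop J] with K hK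
  rw [← Finset.prod_range_mul_prod_Ico _ hK]
  exact mul_le_mul_of_nonneg_left (prod_Ico_zetaR_le J K) <| Finset.prod_nonneg fun j _ =>
    zero_le_one.trans (one_le_zetaR (Nat.le_add_left 2 j))

lemma prod_zetaR_sub_eq_prod_range (n : ℕ) :
    ∏ i : Fin (n - 1), zetaR (n - (i : ℕ)) = ∏ j ∈ Finset.range (n - 1), zetaR (j + 2) := by
  rw [← Finset.prod_range_reflect, ← Fin.prod_univ_eq_prod_range
    (fun j => zetaR (n - 1 - 1 - j + 2))]
  refine Finset.prod_congr rfl fun i _ => ?_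
  congr 1
  omega

theorem tendsto_inv_prod_zetaR :
    Tendsto (fun n : ℕ => (∏ i : Fin (n - 1), zetaR (n - (i : ℕ)))⁻¹) atTop
      (nhds (∏' j : ℕ, zetaR (j + 2))⁻¹) := by
  simp only [prod_zetaR_sub_eq_prod_range]
  exact (multipliable_zetaR.tendsto_prod_tprod_nat.comp (tendsto_sub_atTop_nat 1)).inv₀
    tprod_zetaR_pos.ne'

end Zeta

/-! ### Numerical value of the limit -/

section Numerics

/-- The scaled partial sum `D * ∑_{n = 1}^{N} n⁻ᵏ` of `ζ(k)`, with each of its `N` terms rounded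
down, so that it is a natural number the kernel can evaluate. -/
def floorZetaSum (N D k : ℕ) : ℕ := ∑ n ∈ Finset.range N, D / (n + 1) ^ k

lemma natCast_div_le_natDiv_add_one (m n : ℕ) : (m : ℝ) / n ≤ (m / n : ℕ) + 1 := by
  simpa only [Nat.floor_div_eq_div] using (Nat.lt_floor_add_one ((m : ℝ) / n)).le

lemma floorZetaSum_le_mul_sum (N D k : ℕ) :
    (floorZetaSum N D k : ℝ) ≤ D * ∑ n ∈ Finset.range N, (1 : ℝ) / (n + 1 : ℝ) ^ k := by
  rw [floorZetaSum, Nat.cast_sum, Finset.mul_sum]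
  refine Finset.sum_le_sum fun n _ => ?_
  simpa [div_eq_mul_inv] using Nat.cast_div_le (α := ℝ) (m := D) (n := (n + 1) ^ k)

lemma mul_sum_le_floorZetaSum_add (N D k : ℕ) :
    D * ∑ n ∈ Finset.range N, (1 : ℝ) / (n + 1 : ℝ) ^ k ≤ floorZetaSum N D k + N := by
  have hterm (n : ℕ) : D * ((1 : ℝ) / (n + 1 : ℝ) ^ k) ≤ (D / (n + 1) ^ k : ℕ) + 1 := by
    simpa [div_eq_mul_inv] using natCast_div_le_natDiv_add_one D ((n + 1) ^ k)
  rw [floorZetaSum, Nat.cast_sum, Finset.mul_sum]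
  simpa [Finset.sum_add_distrib] using Finset.sum_le_sum fun n (_ : n ∈ Finset.range N) => hterm n

section Bounds

variable {k : ℕ}

lemma floorZetaSum_le (hk : 2 ≤ k) (N D : ℕ) : (floorZetaSum N D k : ℝ) ≤ D * zetaR k :=
  (floorZetaSum_le_mul_sum N D k).trans (by gcongr; exact sum_le_zetaR hk N)

lemma mul_zetaR_le (hk : 2 ≤ k) {N : ℕ} (hN : 1 ≤ N) (D : ℕ) :
    D * zetaR k ≤ (floorZetaSum N D k + N + D / N ^ (k - 1) + 1 : ℕ) := by
  have hsum := mul_sum_le_floorZetaSum_add N D k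
  have htail := natCast_div_le_natDiv_add_one D (N ^ (k - 1))
  calc D * zetaR k
      ≤ D * (∑ n ∈ Finset.range N, (1 : ℝ) / (n + 1 : ℝ) ^ k + 1 / (N : ℝ) ^ (k - 1)) := by
        gcongr
        exact zetaR_le_sum_add hk hN
    _ = D * ∑ n ∈ Finset.range N, (1 : ℝ) / (n + 1 : ℝ) ^ k + D / ((N ^ (k - 1) : ℕ) : ℝ) := by
        rw [mul_add, mul_one_div, Nat.cast_pow]
    _ ≤ (floorZetaSum N D k + N + D / N ^ (k - 1) + 1 : ℕ) := by
        push_cast at hsum htail ⊢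
        linarith

lemma prod_floorZetaSum_le (hk : 2 ≤ k) (N D : ℕ) (s : Finset ℕ) :
    ((∏ j ∈ s, floorZetaSum N D (j + k) : ℕ) : ℝ) ≤ (D : ℝ) ^ s.card * ∏ j ∈ s, zetaR (j + k) := by
  rw [Nat.cast_prod, Finset.pow_card_mul_prod]
  exact Finset.prod_le_prod (fun j _ => Nat.cast_nonneg _)
    fun j _ => floorZetaSum_le (Nat.le_add_left_of_le hk) N D

lemma pow_mul_prod_zetaR_le (hk : 2 ≤ k) {N : ℕ} (hN : 1 ≤ N) (D : ℕ) (s : Finset ℕ) :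
    (D : ℝ) ^ s.card * ∏ j ∈ s, zetaR (j + k) ≤
      (∏ j ∈ s, (floorZetaSum N D (j + k) + N + D / N ^ (j + k - 1) + 1) : ℕ) := by
  have hzeta (j : ℕ) : 0 ≤ zetaR (j + k) :=
    zero_le_one.trans (one_le_zetaR (Nat.le_add_left_of_le hk))
  rw [Nat.cast_prod, Finset.pow_card_mul_prod]
  exact Finset.prod_le_prod (fun j _ => mul_nonneg D.cast_nonneg (hzeta j))
    fun j _ => mul_zetaR_le (Nat.le_add_left_of_le hk) hN D

end Bounds

lemma zetaR_two : zetaR 2 = Real.pi ^ 2 / 6 := by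
  simpa [zetaR] using ((hasSum_nat_add_iff' 1).2 hasSum_zeta_two).tsum_eq

lemma zetaR_four : zetaR 4 = Real.pi ^ 4 / 90 := by
  simpa [zetaR] using ((hasSum_nat_add_iff' 1).2 hasSum_zeta_four).tsum_eq

lemma le_tsum_one_div_add_cube (N : ℕ) :
    1 / (2 * (N : ℝ) ^ 2 + 2 * N + 1) ≤ ∑' n : ℕ, (1 : ℝ) / ((n : ℝ) + N + 1) ^ 3 := by
  let g (n : ℕ) : ℝ := 1 / (2 * ((n : ℝ) + N) ^ 2 + 2 * (n + N) + 1)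
  have hg : Tendsto g atTop (nhds 0) := by
    refine squeeze_zero (fun n => by positivity) (fun n => ?_)
      tendsto_one_div_add_atTop_nhds_zero_nat
    exact one_div_le_one_div_of_le (by positivity)
      (by nlinarith [n.cast_nonneg (α := ℝ), N.cast_nonneg (α := ℝ)])
  have hstep (n : ℕ) : g n - g (n + 1) ≤ 1 / ((n : ℝ) + N + 1) ^ 3 := by
    have : (0 : ℝ) ≤ n + N := by positivity
    simp only [g, Nat.cast_succ, add_right_comm (n : ℝ) 1]
    rw [div_sub_div _ _ (by positivity) (by positivity),
      div_le_div_iff₀ (by positivity) (by positivity)]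
    nlinarith
  simpa [g] using le_tsum_of_sub_succ_le (summable_one_div_add_pow (by norm_num) N) hg hstep

lemma tsum_one_div_add_cube_le {N : ℕ} (hN : 1 ≤ N) :
    ∑' n : ℕ, (1 : ℝ) / ((n : ℝ) + N + 1) ^ 3 ≤ 1 / (2 * (N : ℝ) ^ 2 + 2 * N) := by
  have hN0 : (0 : ℝ) < N := by exact_mod_cast hN
  let g (n : ℕ) : ℝ := 1 / (2 * ((n : ℝ) + N) ^ 2 + 2 * (n + N))
  have hstep (n : ℕ) : 1 / ((n : ℝ) + N + 1) ^ 3 ≤ g n - g (n + 1) := by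
    have : (0 : ℝ) < n + N := by positivity
    simp only [g, Nat.cast_succ, add_right_comm (n : ℝ) 1]
    rw [div_sub_div _ _ (by positivity) (by positivity),
      div_le_div_iff₀ (by positivity) (by positivity)]
    nlinarith [sq_nonneg ((n : ℝ) + N + 1)]
  simpa [g] using tsum_le_of_le_sub_succ (g := g) (fun n => by positivity)
    (fun n => by positivity) hstep

lemma zetaR_two_mem_Icc : zetaR 2 ∈ Set.Icc (1.644934066848 : ℝ) 1.644934066849 := by
  have hlo := Real.pi_gt_d20
  have hhi := Real.pi_lt_d20
  rw [zetaR_two]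
  constructor <;> nlinarith

lemma zetaR_four_mem_Icc : zetaR 4 ∈ Set.Icc (1.082323233711 : ℝ) 1.082323233712 := by
  have hlo : (3.14159265358979323846 : ℝ) ^ 4 ≤ Real.pi ^ 4 := by
    gcongr; exact Real.pi_gt_d20.le
  have hhi : Real.pi ^ 4 ≤ (3.14159265358979323847 : ℝ) ^ 4 := by
    gcongr; exact Real.pi_lt_d20.le
  rw [zetaR_four]
  constructor <;> linarith

lemma floorZetaSum_three : floorZetaSum 500 (10 ^ 20) 3 = 120205490715559428832 := by
  decide +kernel

lemma zetaR_three_mem_Icc : zetaR 3 ∈ Set.Icc (1.20205690315 : ℝ) 1.20205690317 := by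
  have hlo := floorZetaSum_le_mul_sum 500 (10 ^ 20) 3
  have hhi := mul_sum_le_floorZetaSum_add 500 (10 ^ 20) 3
  have htlo := le_tsum_one_div_add_cube 500
  have hthi := tsum_one_div_add_cube_le (N := 500) (by norm_num)
  rw [floorZetaSum_three] at hlo hhi
  rw [zetaR_eq_sum_add_tsum (k := 3) (by norm_num) 500]
  norm_num at hlo hhi htlo hthi ⊢
  constructor <;> linarith

lemma le_prod_floorZetaSum : 107232158464 * (10 ^ 20) ^ 35 ≤
    10 ^ 11 * ∏ j ∈ Finset.range 35, floorZetaSum 500 (10 ^ 20) (j + 5) := by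
  decide +kernel

lemma prod_floorZetaSum_add_le : 10 ^ 11 * ∏ j ∈ Finset.range 35,
    (floorZetaSum 500 (10 ^ 20) (j + 5) + 500 + 10 ^ 20 / 500 ^ (j + 5 - 1) + 1) ≤
      107232158466 * (10 ^ 20) ^ 35 := by
  decide +kernel

lemma prod_zetaR_add_five_mem_Icc : ∏ j ∈ Finset.range 35, zetaR (j + 5) ∈
    Set.Icc (1.07232158464 : ℝ) 1.07232158466 := by
  have hlo := prod_floorZetaSum_le (k := 5) (by norm_num) 500 (10 ^ 20) (Finset.range 35)
  have hhi := pow_mul_prod_zetaR_le (k := 5) (by norm_num) (N := 500) (by norm_num) (10 ^ 20)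
    (Finset.range 35)
  have hlo_nat := Nat.cast_le (α := ℝ).2 le_prod_floorZetaSum
  have hhi_nat := Nat.cast_le (α := ℝ).2 prod_floorZetaSum_add_le
  rw [Finset.card_range] at hlo hhi
  push_cast at hlo hhi hlo_nat hhi_nat
  constructor <;> linarith

lemma prod_range_thirtyEight (f : ℕ → ℝ) :
    ∏ j ∈ Finset.range 38, f (j + 2) = f 2 * f 3 * f 4 * ∏ j ∈ Finset.range 35, f (j + 5) := by
  rw [Finset.prod_range_succ', Finset.prod_range_succ', Finset.prod_range_succ']
  ring

lemma tprod_zetaR_mem_Icc :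
    ∏' j : ℕ, zetaR (j + 2) ∈ Set.Icc (2.2948565916 : ℝ) 2.2948565918 := by
  obtain ⟨hlo2, hhi2⟩ := zetaR_two_mem_Icc
  obtain ⟨hlo3, hhi3⟩ := zetaR_three_mem_Icc
  obtain ⟨hlo4, hhi4⟩ := zetaR_four_mem_Icc
  obtain ⟨hlo5, hhi5⟩ := prod_zetaR_add_five_mem_Icc
  have hlo := prod_range_le_tprod_zetaR 38
  have hhi := tprod_zetaR_le 38
  rw [prod_range_thirtyEight] at hlo hhi
  have hexp : Real.exp (6 * (1 / 2) ^ (38 + 2)) ≤ (1 - 6 * (1 / 2) ^ (38 + 2))⁻¹ :=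
    le_inv_of_le_inv₀ (by norm_num) (by
      simpa only [Real.exp_neg] using Real.one_sub_le_exp_neg (6 * (1 / 2) ^ (38 + 2)))
  constructor
  · calc (2.2948565916 : ℝ)
        ≤ 1.644934066848 * 1.20205690315 * 1.082323233711 * 1.07232158464 := by norm_num
      _ ≤ zetaR 2 * zetaR 3 * zetaR 4 * ∏ j ∈ Finset.range 35, zetaR (j + 5) := by gcongr
      _ ≤ ∏' j : ℕ, zetaR (j + 2) := hlo
  · calc ∏' j : ℕ, zetaR (j + 2)
        ≤ zetaR 2 * zetaR 3 * zetaR 4 * (∏ j ∈ Finset.range 35, zetaR (j + 5)) *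
            Real.exp (6 * (1 / 2) ^ (38 + 2)) := hhi
      _ ≤ 1.644934066849 * 1.20205690317 * 1.082323233712 * 1.07232158466 *
            (1 - 6 * (1 / 2) ^ (38 + 2))⁻¹ := by gcongr
      _ ≤ 2.2948565918 := by norm_num

theorem abs_inv_tprod_zetaR_sub_lt :
    |(∏' j : ℕ, zetaR (j + 2))⁻¹ - 0.43575707677| < 1 / 10 ^ 10 := by
  obtain ⟨hlo, hhi⟩ := tprod_zetaR_mem_Icc
  have hinv_lo := inv_anti₀ tprod_zetaR_pos hhi
  have hinv_hi := inv_anti₀ (by norm_num) hlo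
  rw [abs_lt]
  norm_num at hinv_lo hinv_hi ⊢
  constructor <;> linarith

end Numerics

/-! ### Primitive matrices -/

section Primitive

open scoped Matrix

variable {ι κ : Type*}

/-- The rows of the integer matrix `M` are linearly independent modulo `p`. -/
def RowsIndepMod (p : ℕ) (M : Matrix ι κ ℤ) : Prop :=
  LinearIndependent (ZMod p) (M.map (Int.cast : ℤ → ZMod p)).row

/-- An integer matrix is primitive if its rows form a basis of a saturated sublattice. This is
encoded prime by prime: the rows stay linearly independent modulo every prime. -/
def IsPrimitive (M : Matrix ι κ ℤ) : Prop := ∀ p : ℕ, p.Prime → RowsIndepMod p M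

lemma RowsIndepMod.of_submatrix {p : ℕ} {M : Matrix ι κ ℤ} {κ' : Type*} {f : κ' → κ}
    (h : RowsIndepMod p (M.submatrix id f)) : RowsIndepMod p M :=
  LinearIndependent.of_comp (LinearMap.funLeft (ZMod p) (ZMod p) f) h

lemma rowsIndepMod_iff_not_dvd_det [Fintype ι] [DecidableEq ι] {p : ℕ} (hp : p.Prime)
    (M : Matrix ι ι ℤ) : RowsIndepMod p M ↔ ¬ (p : ℤ) ∣ M.det := by
  have := Fact.mk hp
  rw [RowsIndepMod, Matrix.linearIndependent_rows_iff_isUnit, Matrix.isUnit_iff_isUnit_det,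
    isUnit_iff_ne_zero, ← Int.cast_det, Ne, ZMod.intCast_zmod_eq_zero_iff_dvd]

lemma RowsIndepMod.mul {p : ℕ} [Fintype κ] [DecidableEq κ] {M : Matrix ι κ ℤ}
    (hM : RowsIndepMod p M) {N : Matrix κ κ ℤ} (hN : IsUnit N.det) : RowsIndepMod p (M * N) := by
  have hNp : IsUnit (N.map (Int.cast : ℤ → ZMod p)) := by
    rw [Matrix.isUnit_iff_isUnit_det, ← Int.cast_det]
    exact hN.map (Int.castRingHom (ZMod p))
  have hcomp : (M * N).map (Int.cast : ℤ → ZMod p) = M.map Int.cast * N.map Int.cast :=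
    Matrix.map_mul (f := Int.castRingHom (ZMod p))
  rw [RowsIndepMod, hcomp]
  exact hM.map' (N.map Int.cast).vecMulLinear
    (LinearMap.ker_eq_bot.2 (Matrix.vecMul_injective_of_isUnit hNp))

lemma RowsIndepMod.dvd_of_vecMul_eq_smul [Fintype ι] {p : ℕ} {M : Matrix ι κ ℤ}
    (hM : RowsIndepMod p M) {a : ι → ℤ} {v : κ → ℤ} (h : a ᵥ* M = (p : ℤ) • v) (i : ι) :
    (p : ℤ) ∣ a i := by
  rw [RowsIndepMod, ← Matrix.vecMul_injective_iff] at hM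
  have hzero : (fun i => (a i : ZMod p)) ᵥ* M.map (Int.cast : ℤ → ZMod p) = 0 := by
    ext j
    have hj := RingHom.map_vecMul (Int.castRingHom (ZMod p)) M a j
    simpa [h, Function.comp_def] using hj.symm
  rw [← ZMod.intCast_zmod_eq_zero_iff_dvd]
  exact congrFun (hM (hzero.trans (Matrix.zero_vecMul _).symm)) i

section Lattice

variable {M : Matrix ι κ ℤ} (hM : IsPrimitive M)

include hM

lemma IsPrimitive.linearIndependent [Finite ι] : LinearIndependent ℤ M.row := by
  have := Fintype.ofFinite ι
  rw [← Matrix.vecMul_injective_iff]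
  refine (injective_iff_map_eq_zero M.vecMulLinear).2 fun a ha => funext fun i => ?_
  obtain ⟨p, hlt, hp⟩ := Nat.exists_infinite_primes ((a i).natAbs + 1)
  have hdvd : (p : ℤ) ∣ a i :=
    (hM p hp).dvd_of_vecMul_eq_smul (v := 0) (by rwa [smul_zero]) i
  exact Int.eq_zero_of_dvd_of_natAbs_lt_natAbs hdvd (by rwa [Int.natAbs_natCast])

lemma IsPrimitive.mem_span_of_natCast_smul_mem [Finite ι] {k : ℕ} (hk : k ≠ 0) {v : κ → ℤ}
    (hv : (k : ℤ) • v ∈ Submodule.span ℤ (Set.range M.row)) :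
    v ∈ Submodule.span ℤ (Set.range M.row) := by
  have := Fintype.ofFinite ι
  induction k using induction_on_primes generalizing v with
  | zero => exact absurd rfl hk
  | one => simpa using hv
  | prime_mul p k hp ih =>
    refine ih (right_ne_zero_of_mul hk) ?_
    rw [← range_vecMulLinear] at hv ⊢
    obtain ⟨a, ha⟩ := hv
    rw [Matrix.vecMulLinear_apply, Nat.cast_mul, mul_smul] at ha
    choose b hb using (hM p hp).dvd_of_vecMul_eq_smul ha
    refine ⟨b, smul_right_injective _ (Int.natCast_ne_zero.2 hp.ne_zero) ?_⟩
    have hab : a = (p : ℤ) • b := funext hb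
    change (p : ℤ) • (b ᵥ* M) = (p : ℤ) • (k : ℤ) • v
    rwa [← Matrix.smul_vecMul, ← hab]

lemma IsPrimitive.isTorsionFree_quotient [Finite ι] :
    Module.IsTorsionFree ℤ ((κ → ℤ) ⧸ Submodule.span ℤ (Set.range M.row)) := by
  rw [Module.isTorsionFree_iff_smul_eq_zero]
  intro k q hkq
  induction q using Submodule.Quotient.induction_on with | H v => ?_
  rw [← Submodule.Quotient.mk_smul, Submodule.Quotient.mk_eq_zero] at hkq
  rw [Submodule.Quotient.mk_eq_zero, or_iff_not_imp_left]
  refine fun hk => hM.mem_span_of_natCast_smul_mem (Int.natAbs_ne_zero.2 hk) ?_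
  rcases Int.natAbs_eq k with h | h
  · rwa [← h]
  · rwa [h, neg_smul, Submodule.neg_mem_iff] at hkq

lemma IsPrimitive.exists_basis [Fintype ι] {σ : Type*} [Fintype σ] [Fintype κ]
    (hcard : Fintype.card ι + Fintype.card σ = Fintype.card κ) :
    ∃ b : Module.Basis (ι ⊕ σ) ℤ (κ → ℤ), ∀ i, b (Sum.inl i) = M i := by
  have := hM.isTorsionFree_quotient
  let bQ := Module.Free.chooseBasis ℤ ((κ → ℤ) ⧸ Submodule.span ℤ (Set.range M.row))
  let b := Module.Basis.sumQuot (Module.Basis.span hM.linearIndependent) bQ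
  have hb := Module.finrank_eq_card_basis b
  rw [Module.finrank_fintype_fun_eq_card, Fintype.card_sum] at hb
  let e := Fintype.equivOfCardEq (Nat.add_left_cancel (hb.symm.trans hcard.symm))
  refine ⟨b.reindex ((Equiv.refl ι).sumCongr e), fun i => ?_⟩
  rw [Module.Basis.reindex_apply, Equiv.sumCongr_symm, Equiv.sumCongr_apply, Sum.map_inl,
    Equiv.refl_symm, Equiv.refl_apply, Module.Basis.sumQuot_inl]
  exact congrArg Subtype.val (Module.Basis.span_apply hM.linearIndependent i)

end Lattice

end Primitive

/-! ### Hermite normal forms with trivial leading diagonal -/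

section Hermite

open scoped Matrix

variable {m : ℕ}

/-- The first `m` columns of a square matrix of size `m + 1`, arranged as rows. -/
def initCols (A : Matrix (Fin (m + 1)) (Fin (m + 1)) ℤ) : Matrix (Fin m) (Fin (m + 1)) ℤ :=
  (A.submatrix id Fin.castSucc)ᵀ

lemma initCols_mul (U H : Matrix (Fin (m + 1)) (Fin (m + 1)) ℤ) :
    initCols (U * H) = initCols H * Uᵀ := by
  rw [initCols, initCols, ← Matrix.transpose_mul]
  rfl

lemma val_le_val_apply_of_strictMono {r n : ℕ} {j : Fin r → Fin n} (hj : StrictMono j)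
    (i : Fin r) : (i : ℕ) ≤ j i := by
  simpa using Finset.card_le_card_of_injOn (s := Finset.Iio i) (t := Finset.Iio (j i)) j
    (fun l hl => by simpa using hj (by simpa using hl)) hj.injective.injOn

lemma IsUnimodular.isUnit_det {U : Matrix (Fin m) (Fin m) ℤ} (hU : IsUnimodular U) :
    IsUnit U.det := Int.isUnit_iff.2 hU

lemma IsHNF.isUpperTriangular {H : Matrix (Fin m) (Fin m) ℤ} (hH : IsHNF H) :
    H.IsUpperTriangular := by
  obtain ⟨r, hr, j, hj, hzero, -, hleft, -⟩ := hH
  intro i l hli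
  by_cases hir : (i : ℕ) < r
  · exact hleft ⟨i, hir⟩ l (hli.trans_le (val_le_val_apply_of_strictMono hj ⟨i, hir⟩))
  · exact hzero i (not_lt.1 hir) l

lemma isPrimitive_initCols_of_isUpperTriangular {H : Matrix (Fin (m + 1)) (Fin (m + 1)) ℤ}
    (hH : H.IsUpperTriangular) (hdiag : ∀ i : Fin m, H i.castSucc i.castSucc = 1) :
    IsPrimitive (initCols H) := by
  intro p hp
  refine RowsIndepMod.of_submatrix (f := Fin.castSucc) ((rowsIndepMod_iff_not_dvd_det hp _).2 ?_)
  have hdet : ((initCols H).submatrix id Fin.castSucc).det = 1 := by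
    change (H.submatrix Fin.castSucc Fin.castSucc)ᵀ.det = 1
    have htri : (H.submatrix Fin.castSucc Fin.castSucc).IsUpperTriangular :=
      fun i l hli => hH (by simpa using hli)
    rw [Matrix.det_transpose, Matrix.det_of_isUpperTriangular htri]
    simp [hdiag]
  rw [hdet]
  exact_mod_cast hp.not_dvd_one

/-- The identity matrix with its last column replaced by `u`. -/
def lastColMatrix (u : Fin (m + 1) → ℤ) : Matrix (Fin (m + 1)) (Fin (m + 1)) ℤ :=
  (1 : Matrix (Fin (m + 1)) (Fin (m + 1)) ℤ).updateCol (Fin.last m) u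

@[simp]
lemma lastColMatrix_last (u : Fin (m + 1) → ℤ) (i : Fin (m + 1)) :
    lastColMatrix u i (Fin.last m) = u i := Matrix.updateCol_self

@[simp]
lemma lastColMatrix_castSucc (u : Fin (m + 1) → ℤ) (i : Fin (m + 1)) (l : Fin m) :
    lastColMatrix u i l.castSucc = (1 : Matrix (Fin (m + 1)) (Fin (m + 1)) ℤ) i l.castSucc :=
  Matrix.updateCol_ne (Fin.castSucc_lt_last l).ne

lemma det_lastColMatrix (u : Fin (m + 1) → ℤ) : (lastColMatrix u).det = u (Fin.last m) := by
  rw [lastColMatrix, ← Matrix.cramer_apply, Matrix.cramer_one]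
  rfl

lemma lastColMatrix_mul (w h : Fin (m + 1) → ℤ) :
    lastColMatrix w * lastColMatrix h = lastColMatrix (lastColMatrix w *ᵥ h) := by
  rw [lastColMatrix, lastColMatrix, Matrix.mul_updateCol, Matrix.mul_one, Matrix.updateCol_idem]
  rfl

lemma lastColMatrix_mulVec_last (w h : Fin (m + 1) → ℤ) :
    (lastColMatrix w *ᵥ h) (Fin.last m) = w (Fin.last m) * h (Fin.last m) := by
  simp [Matrix.mulVec, dotProduct, Fin.sum_univ_castSucc,
    (Fin.castSucc_lt_last _).ne']

lemma lastColMatrix_mulVec_castSucc (w h : Fin (m + 1) → ℤ) (i : Fin m) :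
    (lastColMatrix w *ᵥ h) i.castSucc = h i.castSucc + w i.castSucc * h (Fin.last m) := by
  simp [Matrix.mulVec, dotProduct, Fin.sum_univ_castSucc, Matrix.one_apply]

lemma isHNF_lastColMatrix_of_pos {h : Fin (m + 1) → ℤ} (hpos : 0 < h (Fin.last m))
    (hred : ∀ i : Fin m, 0 ≤ h i.castSucc ∧ h i.castSucc < h (Fin.last m)) :
    IsHNF (lastColMatrix h) := by
  refine ⟨m + 1, le_rfl, id, strictMono_id, fun i hi => absurd i.isLt hi.not_gt, ?_, ?_, ?_⟩
  · intro i
    cases i using Fin.lastCases <;> simp [hpos]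
  · intro i l (hli : l < i)
    change lastColMatrix h i l = 0
    cases l using Fin.lastCases with
    | last => exact absurd (Fin.le_last i) hli.not_ge
    | cast l => rw [lastColMatrix_castSucc, Matrix.one_apply_ne hli.ne']
  · intro i k hki
    cases i using Fin.lastCases with
    | last =>
      cases k using Fin.lastCases with
      | last => exact absurd hki (lt_irrefl _)
      | cast k => simpa using hred k
    | cast i => simp [Matrix.one_apply_ne (Fin.lt_def.2 hki).ne]

lemma isHNF_lastColMatrix_of_eq_zero {h : Fin (m + 1) → ℤ} (hzero : h (Fin.last m) = 0) :
    IsHNF (lastColMatrix h) := by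
  refine ⟨m, m.le_succ, Fin.castSucc, Fin.strictMono_castSucc, ?_, ?_, ?_, ?_⟩
  · intro i hi l
    obtain rfl : i = Fin.last m := Fin.ext (le_antisymm i.is_le hi)
    cases l using Fin.lastCases with
    | last => simpa using hzero
    | cast l => simp [Matrix.one_apply_ne (Fin.castSucc_lt_last l).ne']
  · intro i
    change 0 < lastColMatrix h i.castSucc i.castSucc
    simp
  · intro i l hli
    change lastColMatrix h i.castSucc l = 0
    cases l using Fin.lastCases with
    | last => exact absurd hli (Fin.castSucc_lt_last i).not_gt
    | cast l => simp [Matrix.one_apply_ne (Fin.lt_def.2 hli).ne']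
  · intro i k hki
    change 0 ≤ lastColMatrix h k i.castSucc ∧
      lastColMatrix h k i.castSucc < lastColMatrix h i.castSucc i.castSucc
    simp [Matrix.one_apply_ne (i := k) (j := i.castSucc) (Fin.lt_def.2 hki).ne]

lemma exists_isHNFOf_lastColMatrix (u : Fin (m + 1) → ℤ) :
    ∃ h, IsHNFOf (lastColMatrix h) (lastColMatrix u) := by
  obtain hu | hu := eq_or_ne (u (Fin.last m)) 0
  · exact ⟨u, isHNF_lastColMatrix_of_eq_zero hu, 1, Or.inl Matrix.det_one, (one_mul _).symm⟩
  set d := |u (Fin.last m)| with hd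
  have hd0 : 0 < d := abs_pos.2 hu
  refine ⟨Fin.lastCases d fun i => u i.castSucc % d, isHNF_lastColMatrix_of_pos (by simpa) ?_,
    lastColMatrix (Fin.lastCases (u (Fin.last m)).sign fun i => u i.castSucc / d), ?_, ?_⟩
  · intro i
    simpa using ⟨Int.emod_nonneg _ hd0.ne', Int.emod_lt_of_pos _ hd0⟩
  · rw [IsUnimodular, det_lastColMatrix, Fin.lastCases_last]
    exact (lt_or_gt_of_ne hu).symm.imp Int.sign_eq_one_of_pos Int.sign_eq_neg_one_of_neg
  · rw [lastColMatrix_mul]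
    congr 1
    ext i
    cases i using Fin.lastCases with
    | last =>
      rw [lastColMatrix_mulVec_last, Fin.lastCases_last, Fin.lastCases_last, hd, Int.sign_mul_abs]
    | cast i =>
      rw [lastColMatrix_mulVec_castSucc]
      simp only [Fin.lastCases_last, Fin.lastCases_castSucc, Int.emod_add_ediv_mul]

lemma exists_eq_mul_lastColMatrix {A : Matrix (Fin (m + 1)) (Fin (m + 1)) ℤ}
    (hA : IsPrimitive (initCols A)) :
    ∃ (V : Matrix (Fin (m + 1)) (Fin (m + 1)) ℤ) (u : Fin (m + 1) → ℤ),
      IsUnimodular V ∧ A = V * lastColMatrix u := by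
  obtain ⟨b, hb⟩ := hA.exists_basis (σ := Fin 1) (by simp)
  let e := b.reindex finSumFinEquiv
  let V := (Pi.basisFun ℤ (Fin (m + 1))).toMatrix e
  let W := e.toMatrix (Pi.basisFun ℤ (Fin (m + 1)))
  have hVW : V * W = 1 := Module.Basis.toMatrix_mul_toMatrix_flip _ _
  have hV : ∀ i (l : Fin m), V i l.castSucc = A i l.castSucc := by
    intro i l
    have hel : e l.castSucc = initCols A l := by
      rw [← hb l, Module.Basis.reindex_apply, finSumFinEquiv_symm_apply_castSucc]
    simp [V, Module.Basis.toMatrix_apply, hel, initCols]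
  refine ⟨V, W *ᵥ A.col (Fin.last m), Int.isUnit_iff.1 (Matrix.isUnit_det_of_right_inverse hVW), ?_⟩
  rw [lastColMatrix, Matrix.mul_updateCol, Matrix.mul_one, Matrix.mulVec_mulVec, hVW,
    Matrix.one_mulVec]
  ext i l
  cases l using Fin.lastCases with
  | last => simp
  | cast l => rw [Matrix.updateCol_ne (Fin.castSucc_lt_last l).ne, hV]

theorem exists_isHNFOf_diag_eq_one_iff (A : Matrix (Fin (m + 1)) (Fin (m + 1)) ℤ) :
    (∃ H, IsHNFOf H A ∧ ∀ i : Fin m, H i.castSucc i.castSucc = 1) ↔ IsPrimitive (initCols A) := by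
  constructor
  · rintro ⟨H, ⟨hH, U, hU, rfl⟩, hdiag⟩ p hp
    rw [initCols_mul]
    exact (isPrimitive_initCols_of_isUpperTriangular hH.isUpperTriangular hdiag p hp).mul
      (by rw [Matrix.det_transpose]; exact hU.isUnit_det)
  · intro hA
    obtain ⟨V, u, hV, rfl⟩ := exists_eq_mul_lastColMatrix hA
    obtain ⟨h, hh, W, hW, huh⟩ := exists_isHNFOf_lastColMatrix u
    refine ⟨lastColMatrix h, ⟨hh, V * W, ?_, ?_⟩, fun i => by simp⟩
    · rw [IsUnimodular, ← Int.isUnit_iff, Matrix.det_mul]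
      exact hV.isUnit_det.mul hW.isUnit_det
    · rw [Matrix.mul_assoc, huh]

end Hermite

/-! ### Frequencies in boxes -/

section BoxFreq

variable {ι κ μ : Type*} [Fintype ι] [Fintype κ] [Fintype μ] {z : ι → ℤ} {B : ℕ}

open scoped Classical in
/-- The integer points of the half-open cube of side `2B` centred at `z`. -/
noncomputable def intBox (z : ι → ℤ) (B : ℕ) : Finset (ι → ℤ) :=
  Fintype.piFinset fun i => Finset.Ico (z i - (B : ℤ)) (z i + (B : ℤ))

open scoped Classical in
/-- The proportion of the points of `intBox z B` that satisfy `P`; it is `0` for `B = 0`. -/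
noncomputable def boxFreq (z : ι → ℤ) (B : ℕ) (P : (ι → ℤ) → Prop) : ℝ :=
  (((intBox z B).filter P).card : ℝ) / (2 * (B : ℝ)) ^ Fintype.card ι

lemma mem_intBox {x : ι → ℤ} : x ∈ intBox z B ↔ ∀ i, z i - B ≤ x i ∧ x i < z i + B := by
  simp [intBox]

lemma card_intBox (z : ι → ℤ) (B : ℕ) : (intBox z B).card = (2 * B) ^ Fintype.card ι := by
  have hside : ∀ i, (z i + B - (z i - B)).toNat = 2 * B := fun i => by omega
  simp only [intBox, Fintype.card_piFinset, Int.card_Ico, hside, Finset.prod_const,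
    Finset.card_univ]

lemma eventually_abs_le_of_mem_intBox (z : ι → ℤ) :
    ∀ᶠ B : ℕ in atTop, ∀ x ∈ intBox z B, ∀ i, |x i| ≤ (2 * B : ℕ) := by
  filter_upwards [eventually_ge_atTop (∑ i, (z i).natAbs)] with B hB x hx i
  have hzi : (z i).natAbs ≤ B :=
    (Finset.single_le_sum (fun _ _ => Nat.zero_le _) (Finset.mem_univ i)).trans hB
  have hxi := mem_intBox.1 hx i
  rw [abs_le]
  omega

lemma boxFreq_nonneg (z : ι → ℤ) (B : ℕ) (P : (ι → ℤ) → Prop) : 0 ≤ boxFreq z B P :=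
  div_nonneg (Nat.cast_nonneg _) (by positivity)

lemma boxFreq_mono {P Q : (ι → ℤ) → Prop} (h : ∀ x ∈ intBox z B, P x → Q x) :
    boxFreq z B P ≤ boxFreq z B Q := by
  unfold boxFreq
  gcongr with x hx
  exact h x hx

lemma boxFreq_eq_zero {P : (ι → ℤ) → Prop} (h : ∀ x ∈ intBox z B, ¬ P x) : boxFreq z B P = 0 := by
  classical
  rw [boxFreq, Finset.filter_false_of_mem h, Finset.card_empty, Nat.cast_zero, zero_div]

lemma boxFreq_exists_le_sum {α : Type*} (s : Finset α) (Q : α → (ι → ℤ) → Prop) :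
    boxFreq z B (fun x => ∃ a ∈ s, Q a x) ≤ ∑ a ∈ s, boxFreq z B (Q a) := by
  classical
  simp only [boxFreq, ← Finset.sum_div, ← Nat.cast_sum]
  gcongr
  refine (Finset.card_le_card fun x hx => ?_).trans Finset.card_biUnion_le
  simp only [Finset.mem_filter, Finset.mem_biUnion] at hx ⊢
  exact hx.2.imp fun a ha => ⟨ha.1, hx.1, ha.2⟩

lemma boxFreq_or_le (P Q : (ι → ℤ) → Prop) :
    boxFreq z B (fun x => P x ∨ Q x) ≤ boxFreq z B P + boxFreq z B Q := by
  classical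
  simp only [boxFreq, ← add_div, ← Nat.cast_add]
  gcongr
  refine (Finset.card_le_card fun x hx => ?_).trans (Finset.card_union_le _ _)
  simpa [and_or_left] using hx

lemma boxFreq_reindex (e : κ ≃ ι) (z : ι → ℤ) (B : ℕ) (P : (ι → ℤ) → Prop) :
    boxFreq z B P = boxFreq (z ∘ e) B fun y => P (y ∘ e.symm) := by
  classical
  rw [boxFreq, boxFreq, Fintype.card_congr e]
  congr 2
  refine Finset.card_equiv (e.arrowCongr (Equiv.refl ℤ)).symm fun x => ?_
  simp only [Finset.mem_filter, mem_intBox]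
  refine and_congr (e.forall_congr_right).symm (iff_of_eq (congrArg P (funext fun i => ?_)))
  simp

lemma boxFreq_sum (z : κ ⊕ μ → ℤ) (B : ℕ) (P : (κ ⊕ μ → ℤ) → Prop) :
    boxFreq z B P = (∑ a ∈ intBox (z ∘ Sum.inl) B,
      boxFreq (z ∘ Sum.inr) B fun r => P (Sum.elim a r)) / (2 * (B : ℝ)) ^ Fintype.card κ := by
  classical
  have hcard : ((intBox z B).filter P).card = ∑ a ∈ intBox (z ∘ Sum.inl) B,
      ((intBox (z ∘ Sum.inr) B).filter fun r => P (Sum.elim a r)).card := by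
    rw [← Finset.card_sigma]
    refine Finset.card_nbij' (fun x => ⟨x ∘ Sum.inl, x ∘ Sum.inr⟩) (fun y => Sum.elim y.1 y.2)
      ?_ ?_ ?_ ?_
    · intro x hx
      simpa [mem_intBox, Sum.forall, and_assoc] using hx
    · intro y hy
      simpa [mem_intBox, Sum.forall, and_assoc] using hy
    · exact fun x _ => Sum.elim_comp_inl_inr x
    · exact fun _ _ => rfl
  simp only [boxFreq, hcard, Nat.cast_sum, ← Finset.sum_div, div_div, Fintype.card_sum, pow_add,
    mul_comm]

lemma boxFreq_sum_le {z : κ ⊕ μ → ℤ} (hB : B ≠ 0) {P : (κ ⊕ μ → ℤ) → Prop} {c : ℝ}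
    (h : ∀ a ∈ intBox (z ∘ Sum.inl) B, boxFreq (z ∘ Sum.inr) B (fun r => P (Sum.elim a r)) ≤ c) :
    boxFreq z B P ≤ c := by
  rw [boxFreq_sum, div_le_iff₀ (by positivity)]
  refine (Finset.sum_le_card_nsmul _ _ c h).trans_eq ?_
  rw [card_intBox, nsmul_eq_mul, mul_comm]
  push_cast
  rfl

lemma boxFreq_const (z : ι → ℤ) (hB : B ≠ 0) (p : Prop) [Decidable p] :
    boxFreq z B (fun _ => p) = if p then 1 else 0 := by
  split_ifs with hp
  · simp only [boxFreq, hp, Finset.filter_true, card_intBox]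
    push_cast
    exact div_self (by positivity)
  · exact boxFreq_eq_zero fun _ _ => hp

lemma boxFreq_comp_inl (z : κ ⊕ μ → ℤ) (hB : B ≠ 0) (P : (κ → ℤ) → Prop) :
    boxFreq z B (fun x => P (x ∘ Sum.inl)) = boxFreq (z ∘ Sum.inl) B P := by
  classical
  simp only [boxFreq_sum, Sum.elim_comp_inl, boxFreq_const _ hB, Finset.sum_boole]
  rfl

lemma boxFreq_comp_injective {f : κ → ι} (hf : Function.Injective f) (z : ι → ℤ) (hB : B ≠ 0)
    (P : (κ → ℤ) → Prop) : boxFreq z B (fun x => P (x ∘ f)) = boxFreq (z ∘ f) B P := by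
  classical
  let e : κ ⊕ ↥(Set.range f)ᶜ ≃ ι :=
    ((Equiv.ofInjective f hf).sumCongr (Equiv.refl _)).trans (Equiv.Set.sumCompl (Set.range f))
  have he : ∀ k, e.symm (f k) = Sum.inl k := fun k => by
    rw [Equiv.symm_apply_eq]
    simp [e]
  have hinl : (z ∘ e) ∘ Sum.inl = z ∘ f := by ext k; simp [e]
  rw [boxFreq_reindex e, ← hinl, ← boxFreq_comp_inl _ hB]
  simp only [Function.comp_def, he]

end BoxFreq

/-! ### Residue classes in boxes -/

section Residues

lemma abs_card_filter_intCast_eq_sub_le {N : ℕ} [NeZero N] {a b : ℤ} (hab : a ≤ b) (r : ZMod N) :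
    |(((Finset.Ico a b).filter fun x : ℤ => (x : ZMod N) = r).card : ℝ) - (b - a) / N| ≤ 1 := by
  have hN : (0 : ℤ) < N := by exact_mod_cast Nat.pos_of_neZero N
  have hfilter : ((Finset.Ico a b).filter fun x : ℤ => (x : ZMod N) = r) =
      (Finset.Ico a b).filter (· ≡ (r.val : ℤ) [ZMOD N]) :=
    Finset.filter_congr fun x _ => by rw [← ZMod.intCast_eq_intCast_iff]; simp
  have hcard := Int.Ico_filter_modEq_card a b hN r.val
  rw [← hfilter] at hcard
  set u : ℚ := (b - (r.val : ℤ)) / (N : ℤ)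
  set v : ℚ := (a - (r.val : ℤ)) / (N : ℤ)
  have huv : u - v = (b - a) / N := by rw [← sub_div, sub_sub_sub_cancel_right]; rfl
  have hvu : ⌈v⌉ ≤ ⌈u⌉ := Int.ceil_mono (by simp only [u, v]; gcongr)
  rw [max_eq_left (sub_nonneg.2 hvu)] at hcard
  have hbound : |(((Finset.Ico a b).filter fun x : ℤ => (x : ZMod N) = r).card : ℚ) -
      (b - a) / N| ≤ 1 := by
    rw [← Int.cast_natCast, hcard, ← huv, abs_le]
    push_cast
    constructor <;> linarith [Int.le_ceil u, Int.ceil_lt_add_one u, Int.le_ceil v,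
      Int.ceil_lt_add_one v]
  exact_mod_cast hbound

/-- The proportion of the integers in `[a - B, a + B)` lying in the residue class `r`. -/
noncomputable def residueFreq {N : ℕ} (a : ℤ) (B : ℕ) (r : ZMod N) : ℝ :=
  (((Finset.Ico (a - (B : ℤ)) (a + (B : ℤ))).filter fun x : ℤ => (x : ZMod N) = r).card : ℝ) /
    (2 * (B : ℝ))

lemma abs_residueFreq_sub_le {N : ℕ} [NeZero N] (a : ℤ) {B : ℕ} (hB : B ≠ 0) (r : ZMod N) :
    |residueFreq a B r - 1 / N| ≤ 1 / (2 * B) := by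
  have hB0 : (0 : ℝ) < 2 * B := by positivity
  have hcard := abs_card_filter_intCast_eq_sub_le (N := N) (a := a - B) (b := a + B) (by omega) r
  have hside : (((a + B : ℤ) : ℝ) - ((a - B : ℤ) : ℝ)) / N = 1 / N * (2 * B) := by
    push_cast
    ring
  rw [hside] at hcard
  rwa [residueFreq, div_sub' hB0.ne', abs_div, abs_of_pos hB0, div_le_div_iff_of_pos_right hB0,
    mul_comm (2 * (B : ℝ))]

lemma residueFreq_le {N : ℕ} [NeZero N] (a : ℤ) {B : ℕ} (hNB : N ≤ 2 * B) (r : ZMod N) :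
    residueFreq a B r ≤ 2 / N := by
  have hN0 : (0 : ℝ) < N := by exact_mod_cast Nat.pos_of_neZero N
  have hB : B ≠ 0 := by have := NeZero.ne N; omega
  have hle : 1 / (2 * B : ℝ) ≤ 1 / N := one_div_le_one_div_of_le hN0 (by exact_mod_cast hNB)
  have hsub := (abs_le.1 (abs_residueFreq_sub_le a hB r)).2
  rw [← one_add_one_eq_two, add_div]
  linarith

lemma tendsto_residueFreq {N : ℕ} [NeZero N] (a : ℤ) (r : ZMod N) :
    Tendsto (fun B : ℕ => residueFreq a B r) atTop (nhds (1 / N)) := by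
  rw [tendsto_iff_dist_tendsto_zero]
  refine squeeze_zero' (Eventually.of_forall fun _ => dist_nonneg) ?_
    (tendsto_const_div_atTop_nhds_zero_nat (1 / 2 : ℝ))
  filter_upwards [eventually_ne_atTop 0] with B hB
  exact (abs_residueFreq_sub_le a hB r).trans_eq (div_div _ _ _).symm

variable {ι : Type*} [Fintype ι]

open scoped Classical in
lemma boxFreq_intCast (z : ι → ℤ) (B : ℕ) {N : ℕ} [NeZero N] (Q : (ι → ZMod N) → Prop) :
    boxFreq z B (fun x => Q fun i => (x i : ZMod N)) =
      ∑ r ∈ Finset.univ.filter Q, ∏ i, residueFreq (z i) B (r i) := by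
  rw [boxFreq, Finset.card_eq_sum_card_fiberwise (f := fun x i => (x i : ZMod N))
    (t := Finset.univ.filter Q) fun x hx => by simpa using (Finset.mem_filter.1 hx).2,
    Nat.cast_sum, Finset.sum_div]
  refine Finset.sum_congr rfl fun r hr => ?_
  have hfiber : ((intBox z B).filter fun x => Q fun i => (x i : ZMod N)).filter
      (fun x => (fun i => (x i : ZMod N)) = r) = Fintype.piFinset fun i =>
        (Finset.Ico (z i - (B : ℤ)) (z i + (B : ℤ))).filter fun x : ℤ => (x : ZMod N) = r i := by
    ext x
    simp only [Finset.mem_filter, intBox, Fintype.mem_piFinset, forall_and, ← funext_iff, and_assoc]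
    refine and_congr_right fun _ => and_iff_right_of_imp ?_
    rintro rfl
    exact (Finset.mem_filter.1 hr).2
  simp only [residueFreq, hfiber, Fintype.card_piFinset, Finset.prod_div_distrib,
    Finset.prod_const, Finset.card_univ, Nat.cast_prod]

lemma tendsto_boxFreq_intCast (z : ι → ℤ) {N : ℕ} [NeZero N] (Q : (ι → ZMod N) → Prop) :
    Tendsto (fun B : ℕ => boxFreq z B fun x => Q fun i => (x i : ZMod N)) atTop
      (nhds (Nat.card {r // Q r} / (N : ℝ) ^ Fintype.card ι)) := by
  classical
  have hlim : (Nat.card {r // Q r} / (N : ℝ) ^ Fintype.card ι) =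
      ∑ r ∈ Finset.univ.filter Q, ∏ _i : ι, (1 / N : ℝ) := by
    rw [Finset.sum_const, Finset.prod_const, Nat.card_eq_fintype_card, Fintype.card_subtype,
      Finset.card_univ, nsmul_eq_mul, one_div, inv_pow, div_eq_mul_inv]
  simp only [hlim, boxFreq_intCast]
  exact tendsto_finsetSum _ fun r _ => tendsto_finsetProd _ fun i _ => tendsto_residueFreq _ _

lemma boxFreq_intCast_le (z : ι → ℤ) {B N : ℕ} [NeZero N] (hNB : N ≤ 2 * B)
    (Q : (ι → ZMod N) → Prop) :
    boxFreq z B (fun x => Q fun i => (x i : ZMod N)) ≤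
      2 ^ Fintype.card ι * (Nat.card {r // Q r} / (N : ℝ) ^ Fintype.card ι) := by
  classical
  calc boxFreq z B (fun x => Q fun i => (x i : ZMod N))
      = ∑ r ∈ Finset.univ.filter Q, ∏ i, residueFreq (z i) B (r i) := boxFreq_intCast z B Q
    _ ≤ ∑ r ∈ Finset.univ.filter Q, ∏ _i : ι, (2 / N : ℝ) :=
        Finset.sum_le_sum fun r _ => Finset.prod_le_prod
          (fun i _ => div_nonneg (Nat.cast_nonneg _) (by positivity))
          fun i _ => residueFreq_le (z i) hNB (r i)
    _ = 2 ^ Fintype.card ι * (Nat.card {r // Q r} / (N : ℝ) ^ Fintype.card ι) := by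
        rw [Finset.sum_const, Finset.prod_const, Nat.card_eq_fintype_card, Fintype.card_subtype,
          Finset.card_univ, nsmul_eq_mul, div_pow]
        ring

lemma tendsto_boxFreq_forall_intCast {σ : Type*} [Fintype σ] {q : σ → ℕ} [∀ s, NeZero (q s)]
    (hq : Pairwise (Function.onFun Nat.Coprime q)) (z : ι → ℤ)
    (Q : ∀ s, (ι → ZMod (q s)) → Prop) :
    Tendsto (fun B : ℕ => boxFreq z B fun x => ∀ s, Q s fun i => (x i : ZMod (q s))) atTop
      (nhds (∏ s, Nat.card {r // Q s r} / (q s : ℝ) ^ Fintype.card ι)) := by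
  have : NeZero (∏ s, q s) := ⟨Finset.prod_ne_zero_iff.2 fun s _ => NeZero.ne (q s)⟩
  let crt : (ι → ZMod (∏ s, q s)) ≃ ∀ s, ι → ZMod (q s) :=
    ((Equiv.refl ι).arrowCongr (ZMod.prodEquivPi q hq).toEquiv).trans (Equiv.piComm _)
  have hcrt : ∀ (x : ι → ℤ) (s : σ), crt (fun i => x i) s = fun i => (x i : ZMod (q s)) :=
    fun x s => funext fun i =>
      congrFun (map_intCast (ZMod.prodEquivPi q hq) (x i)) s
  have hcard : Nat.card {r // ∀ s, Q s (crt r s)} = ∏ s, Nat.card {r // Q s r} := by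
    rw [← Nat.card_pi]
    exact Nat.card_congr ((crt.subtypeEquivOfSubtype (p := fun y => ∀ s, Q s (y s))).trans
      (Equiv.subtypePiEquivPi (p := fun s r => Q s r)))
  have hlim := tendsto_boxFreq_intCast z fun r => ∀ s, Q s (crt r s)
  simpa only [hcrt, hcard, Nat.cast_prod, ← Finset.prod_pow, ← Finset.prod_div_distrib] using hlim

end Residues

/-! ### Matrices over finite fields -/

section FiniteField

open scoped Matrix

variable {ι κ R : Type*}

/-- The matrix with `(i, j)` entry `x (i, j)`. It transports statements about boxes in `ι × κ → ℤ`
to matrices. -/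
def unvec (x : ι × κ → R) : Matrix ι κ R := Matrix.of (Function.curry x)

/-- The proportion of matrices with linearly independent rows among the `k × n` matrices over a
field with `q` elements, for `k ≤ n`. -/
noncomputable def fullRankDensity (k n q : ℕ) : ℝ := ∏ i : Fin k, (1 - ((q : ℝ) ^ (n - i))⁻¹)

section Density

variable {k n : ℕ} (F : Type*) [Field F] [Fintype F]

lemma card_linearIndependent_div (hkn : k ≤ n) :
    (Nat.card {r : Fin k × Fin n → F // LinearIndependent F (unvec r).row} : ℝ) /
      (Fintype.card F : ℝ) ^ Fintype.card (Fin k × Fin n) =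
        fullRankDensity k n (Fintype.card F) := by
  have hq : (Fintype.card F : ℝ) ≠ 0 := by simp
  have hcurry : Nat.card {r : Fin k × Fin n → F // LinearIndependent F (unvec r).row} =
      Nat.card {s : Fin k → Fin n → F // LinearIndependent F s} :=
    Nat.card_congr ((Equiv.curry (Fin k) (Fin n) F).subtypeEquiv fun _ => Iff.rfl)
  have hden : (Fintype.card F : ℝ) ^ Fintype.card (Fin k × Fin n) =
      ∏ _i : Fin k, (Fintype.card F : ℝ) ^ n := by
    rw [Fintype.card_prod, Fintype.card_fin, Fintype.card_fin, Fin.prod_const, ← pow_mul, mul_comm]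
  rw [hcurry, card_linearIndependent (by simpa using hkn), Module.finrank_fin_fun, Nat.cast_prod,
    hden, ← Finset.prod_div_distrib]
  refine Finset.prod_congr rfl fun i _ => ?_
  have hin : (i : ℕ) ≤ n := i.isLt.le.trans hkn
  rw [Nat.cast_sub (Nat.pow_le_pow_right Fintype.card_pos hin), Nat.cast_pow, Nat.cast_pow, sub_div,
    div_self (pow_ne_zero n hq), ← inv_div, pow_sub₀ _ hq hin, div_eq_mul_inv]

lemma card_not_linearIndependent_div (hkn : k ≤ n) :
    (Nat.card {r : Fin k × Fin n → F // ¬ LinearIndependent F (unvec r).row} : ℝ) /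
      (Fintype.card F : ℝ) ^ Fintype.card (Fin k × Fin n) =
        1 - fullRankDensity k n (Fintype.card F) := by
  classical
  have hq : (Fintype.card F : ℝ) ^ Fintype.card (Fin k × Fin n) ≠ 0 := by simp
  rw [← card_linearIndependent_div F hkn, eq_sub_iff_add_eq, ← add_div, div_eq_one_iff_eq hq,
    Nat.card_eq_fintype_card, Nat.card_eq_fintype_card, ← Nat.cast_add, add_comm,
    ← Fintype.card_sum, Fintype.card_congr (Equiv.sumCompl _), Fintype.card_fun, Nat.cast_pow]

end Density

lemma one_sub_fullRankDensity_le {k n s q : ℕ} (hq : 1 ≤ q) (h : k + s ≤ n) :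
    1 - fullRankDensity k n q ≤ k / (q : ℝ) ^ (s + 1) := by
  have hq1 : (1 : ℝ) ≤ q := by exact_mod_cast hq
  set x : ℝ := ((q : ℝ) ^ (s + 1))⁻¹ with hx
  have hx1 : x ≤ 1 := inv_le_one_of_one_le₀ (one_le_pow₀ hq1)
  have hprod : (1 - x) ^ k ≤ fullRankDensity k n q := calc
    (1 - x) ^ k = ∏ _i : Fin k, (1 - x) := (Fin.prod_const k _).symm
    _ ≤ fullRankDensity k n q := Finset.prod_le_prod (fun _ _ => sub_nonneg.2 hx1) fun i _ => by
      rw [hx]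
      gcongr
      omega
  have hbernoulli := one_add_mul_le_pow (by linarith : -2 ≤ -x) k
  rw [div_eq_mul_inv, ← hx]
  rw [← sub_eq_add_neg] at hbernoulli
  linarith

lemma exists_ne_zero_forall_vecMul_eq_zero {K : Type*} [Field K] {m : ℕ}
    {L : Matrix (Fin (m + 1)) κ K}
    (hL : LinearIndependent K (L.submatrix Fin.castSucc id).row) :
    ∃ v : Fin (m + 1) → K, v ≠ 0 ∧ ∀ w, w ᵥ* L = 0 → ∃ c : K, w = c • v := by
  have hlast : ∀ w : Fin (m + 1) → K, w ᵥ* L = 0 → w (Fin.last m) = 0 → w = 0 := by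
    intro w hw hw0
    rw [Matrix.vecMul_eq_sum, Fin.sum_univ_castSucc, hw0, zero_smul, add_zero] at hw
    exact funext (Fin.lastCases hw0 (Fintype.linearIndependent_iff.1 hL _ hw))
  by_cases hker : ∃ v : Fin (m + 1) → K, v ≠ 0 ∧ v ᵥ* L = 0
  · obtain ⟨v, hv, hvL⟩ := hker
    have hvlast : v (Fin.last m) ≠ 0 := fun h => hv (hlast v hvL h)
    refine ⟨v, hv, fun w hw => ⟨w (Fin.last m) / v (Fin.last m), sub_eq_zero.1 (hlast _ ?_ ?_)⟩⟩
    · rw [Matrix.sub_vecMul, Matrix.smul_vecMul, hw, hvL, smul_zero, sub_zero]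
    · simp [hvlast]
  · push Not at hker
    exact ⟨1, one_ne_zero, fun w hw => ⟨0, by_contra fun h => hker w (by simpa using h) hw⟩⟩

end FiniteField

/-! ### Large primes -/

section LargePrimes

open scoped Matrix

variable {ι κ : Type*}

section Column

variable {n : ℕ}

/-- The matrix `L` with the column `r` appended on the right. -/
def snocCol {R : Type*} (L : Matrix ι (Fin n) R) (r : ι → R) : Matrix ι (Fin (n + 1)) R :=
  Matrix.of fun i => Fin.snoc (L i) (r i)

lemma snocCol_submatrix_castSucc {R : Type*} (L : Matrix ι (Fin n) R) (r : ι → R) :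
    (snocCol L r).submatrix id Fin.castSucc = L := by
  ext i j
  simp [snocCol]

lemma boxFreq_unvec_le [Fintype ι] {z : ι × Fin (n + 1) → ℤ} {B : ℕ} (hB : B ≠ 0)
    {P : Matrix ι (Fin (n + 1)) ℤ → Prop} {c : ℝ}
    (h : ∀ y ∈ intBox (z ∘ Prod.map id Fin.castSucc) B,
      boxFreq (fun i => z (i, Fin.last n)) B (fun r => P (snocCol (unvec y) r)) ≤ c) :
    boxFreq z B (fun x => P (unvec x)) ≤ c := by
  let f : (ι × Fin n) ⊕ ι → ι × Fin (n + 1) :=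
    Sum.elim (Prod.map id Fin.castSucc) fun i => (i, Fin.last n)
  have hf : Function.Bijective f := by
    refine ⟨?_, ?_⟩
    · rintro (⟨i, j⟩ | i) (⟨i', j'⟩ | i') <;>
        simp [f, Fin.castSucc_ne_last, (Fin.castSucc_ne_last _).symm]
    · rintro ⟨i, j⟩
      induction j using Fin.lastCases with
      | last => exact ⟨Sum.inr i, rfl⟩
      | cast j => exact ⟨Sum.inl (i, j), rfl⟩
  let e := Equiv.ofBijective f hf
  rw [boxFreq_reindex e]
  refine boxFreq_sum_le hB fun y hy => ?_
  have hsnoc : ∀ r, unvec (Sum.elim y r ∘ e.symm) = snocCol (unvec y) r := by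
    intro r
    ext i j
    induction j using Fin.lastCases with
    | last =>
      have : e.symm (i, Fin.last n) = Sum.inr i := e.symm_apply_eq.2 rfl
      simp [unvec, snocCol, this]
    | cast j =>
      have : e.symm (i, j.castSucc) = Sum.inl (i, j) := e.symm_apply_eq.2 rfl
      simp [unvec, snocCol, this]
  simp only [hsnoc]
  exact h y hy

end Column

section Fintype

variable [Fintype ι]

lemma not_rowsIndepMod_iff {p : ℕ} {M : Matrix ι κ ℤ} :
    ¬ RowsIndepMod p M ↔ ∃ w : ι → ZMod p, w ≠ 0 ∧ w ᵥ* M.map (Int.cast : ℤ → ZMod p) = 0 := by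
  rw [RowsIndepMod, ← Matrix.vecMul_injective_iff]
  refine (not_congr (injective_iff_map_eq_zero (M.map Int.cast).vecMulLinear)).trans ?_
  simp only [Matrix.vecMulLinear_apply, not_forall, ← and_comm, exists_prop, ne_eq]

lemma eq_of_dotProduct_intCast_eq_zero {p : ℕ} [Fact p.Prime] {w : ι → ZMod p} {j : ι}
    (hj : w j ≠ 0) {r s : ι → ℤ} (hr : w ⬝ᵥ (fun i => (r i : ZMod p)) = 0)
    (hs : w ⬝ᵥ (fun i => (s i : ZMod p)) = 0) (hrs : ∀ i ≠ j, r i = s i)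
    (hlt : |r j - s j| < p) : r = s := by
  classical
  have hsub : (fun i => (r i : ZMod p)) - (fun i => (s i : ZMod p)) =
      Pi.single j ((r j : ZMod p) - s j) := by
    ext i
    by_cases hi : i = j
    · subst hi
      simp
    · simp [hi, hrs i hi]
  have hdot : w j * ((r j : ZMod p) - s j) = 0 := by
    rw [← dotProduct_single, ← hsub, dotProduct_sub, hr, hs, sub_zero]
  have hdvd : (p : ℤ) ∣ r j - s j := by
    rw [← ZMod.intCast_zmod_eq_zero_iff_dvd, Int.cast_sub]
    exact (mul_eq_zero.1 hdot).resolve_left hj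
  ext i
  by_cases hi : i = j
  · exact hi ▸ sub_eq_zero.1 (Int.eq_zero_of_abs_lt_dvd hdvd hlt)
  · exact hrs i hi

lemma boxFreq_dotProduct_eq_zero_le {p : ℕ} (hp : p.Prime) {B : ℕ} (hB : B ≠ 0) (hBp : 2 * B ≤ p)
    (z : ι → ℤ) {w : ι → ZMod p} (hw : w ≠ 0) :
    boxFreq z B (fun r => w ⬝ᵥ (fun i => (r i : ZMod p)) = 0) ≤ 1 / (2 * B : ℝ) := by
  classical
  have := Fact.mk hp
  have hB0 : (0 : ℝ) < 2 * B := by positivity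
  obtain ⟨j, hj⟩ := Function.ne_iff.1 hw
  let f : {i // i ≠ j} → ι := Subtype.val
  have hcard : ((intBox z B).filter fun r => w ⬝ᵥ (fun i => (r i : ZMod p)) = 0).card ≤
      (intBox (z ∘ f) B).card := by
    refine Finset.card_le_card_of_injOn (fun r => r ∘ f) (fun r hr => ?_) fun r hr s hs hrs => ?_
    · exact mem_intBox.2 fun i => mem_intBox.1 (Finset.mem_filter.1 hr).1 (f i)
    · simp only [Finset.coe_filter, Set.mem_ofPred_eq, mem_intBox] at hr hs
      refine eq_of_dotProduct_intCast_eq_zero hj hr.2 hs.2 (fun i hi => congrFun hrs ⟨i, hi⟩) ?_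
      have hrj := hr.1 j
      have hsj := hs.1 j
      rw [abs_lt]
      omega
  have hι : Fintype.card ι = Fintype.card {i // i ≠ j} + 1 := by
    have := Fintype.card_pos_iff.2 ⟨j⟩
    simp
    omega
  rw [card_intBox] at hcard
  rw [boxFreq, hι, pow_succ, ← div_div, div_le_div_iff_of_pos_right hB0]
  refine div_le_one_of_le₀ ?_ (by positivity)
  exact_mod_cast hcard

end Fintype

/-- The rows of `M` are linearly dependent modulo some prime exceeding `C`. -/
def DependentBeyond (C : ℕ) (M : Matrix ι κ ℤ) : Prop :=
  ∃ p : ℕ, p.Prime ∧ C < p ∧ ¬ RowsIndepMod p M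

lemma boxFreq_not_rowsIndepMod_snocCol_le {m n p : ℕ} (hp : p.Prime) {B : ℕ} (hB : B ≠ 0)
    (hBp : 2 * B ≤ p) (z : Fin (m + 1) → ℤ) {L : Matrix (Fin (m + 1)) (Fin n) ℤ}
    (hL : RowsIndepMod p (L.submatrix Fin.castSucc id)) :
    boxFreq z B (fun r => ¬ RowsIndepMod p (snocCol L r)) ≤ 1 / (2 * B : ℝ) := by
  have := Fact.mk hp
  obtain ⟨v, hv, hker⟩ :=
    exists_ne_zero_forall_vecMul_eq_zero (L := L.map (Int.cast : ℤ → ZMod p)) hL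
  refine (boxFreq_mono fun r _ hr => ?_).trans (boxFreq_dotProduct_eq_zero_le hp hB hBp z hv)
  obtain ⟨w, hw, hwr⟩ := not_rowsIndepMod_iff.1 hr
  have hwL : w ᵥ* L.map (Int.cast : ℤ → ZMod p) = 0 := by
    ext j
    simpa [snocCol, Matrix.vecMul, dotProduct] using congrFun hwr j.castSucc
  have hwlast : w ⬝ᵥ (fun i => (r i : ZMod p)) = 0 := by
    simpa [snocCol, Matrix.vecMul, dotProduct] using congrFun hwr (Fin.last n)
  obtain ⟨c, rfl⟩ := hker w hwL
  rw [smul_dotProduct, smul_eq_mul] at hwlast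
  exact (mul_eq_zero.1 hwlast).resolve_left (left_ne_zero_of_smul hw)

lemma card_filter_primeFactors_le {C k d : ℕ} (hd : d ≠ 0) (h : d < C ^ (k + 1)) :
    (d.primeFactors.filter (C < ·)).card ≤ k := by
  by_contra! hk
  have hC : 0 < C := Nat.pos_of_ne_zero fun hC => by simp [hC] at h
  refine h.not_ge ?_
  calc C ^ (k + 1) ≤ C ^ (d.primeFactors.filter (C < ·)).card := Nat.pow_le_pow_right hC hk
    _ ≤ ∏ p ∈ d.primeFactors.filter (C < ·), p :=
        Finset.pow_card_le_prod _ _ _ fun p hp => (Finset.mem_filter.1 hp).2.le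
    _ ≤ ∏ p ∈ d.primeFactors, p :=
        Finset.prod_le_prod_of_subset_of_one_le' (Finset.filter_subset _ _) fun p hp _ =>
          (Nat.prime_of_mem_primeFactors hp).one_le
    _ ≤ d := Nat.le_of_dvd (Nat.pos_of_ne_zero hd) (Nat.prod_primeFactors_dvd d)

lemma natAbs_det_lt {n C : ℕ} {M : Matrix (Fin n) (Fin n) ℤ} (hM : ∀ i j, |M i j| ≤ C)
    (hC : n.factorial < C) : M.det.natAbs < C ^ (n + 1) := by
  have hdet := Matrix.det_le (abv := AbsoluteValue.abs) (x := (C : ℤ)) hM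
  have hlt : n.factorial * C ^ n < C ^ (n + 1) := by
    rw [pow_succ']
    exact Nat.mul_lt_mul_of_pos_right hC (Nat.pow_pos (Nat.zero_lt_of_lt hC))
  refine lt_of_le_of_lt ?_ hlt
  zify
  simpa [nsmul_eq_mul] using hdet

lemma boxFreq_dependentBeyond_snocCol_le {m B : ℕ} (z : Fin (m + 1) → ℤ)
    {L : Matrix (Fin (m + 1)) (Fin (m + 1)) ℤ} (hdet : L.det ≠ 0)
    (hent : ∀ i j, |L i j| ≤ (2 * B : ℕ)) (hB : (m + 1).factorial < 2 * B)
    (hL : ¬ DependentBeyond (2 * B) (L.submatrix Fin.castSucc id)) :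
    boxFreq z B (fun r => DependentBeyond (2 * B) (snocCol L r)) ≤ (m + 1) / (2 * B : ℝ) := by
  let S := L.det.natAbs.primeFactors.filter (2 * B < ·)
  have hS : S.card ≤ m + 1 :=
    card_filter_primeFactors_le (Int.natAbs_ne_zero.2 hdet) (natAbs_det_lt hent hB)
  calc boxFreq z B (fun r => DependentBeyond (2 * B) (snocCol L r))
      ≤ boxFreq z B (fun r => ∃ p ∈ S, ¬ RowsIndepMod p (snocCol L r)) := by
        refine boxFreq_mono fun r _ ⟨p, hp, hBp, hr⟩ => ⟨p, ?_, hr⟩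
        have hLp : ¬ RowsIndepMod p L := fun h =>
          hr (RowsIndepMod.of_submatrix (f := Fin.castSucc) (by rwa [snocCol_submatrix_castSucc]))
        have hdvd := not_not.1 (mt (rowsIndepMod_iff_not_dvd_det hp L).2 hLp)
        exact Finset.mem_filter.2 ⟨hp.mem_primeFactors (Int.natCast_dvd.1 hdvd)
          (Int.natAbs_ne_zero.2 hdet), hBp⟩
    _ ≤ ∑ p ∈ S, boxFreq z B (fun r => ¬ RowsIndepMod p (snocCol L r)) :=
        boxFreq_exists_le_sum _ _
    _ ≤ S.card • (1 / (2 * B : ℝ)) := Finset.sum_le_card_nsmul _ _ _ fun p hp => by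
        obtain ⟨hpd, hBp⟩ := Finset.mem_filter.1 hp
        have hpp := Nat.prime_of_mem_primeFactors hpd
        exact boxFreq_not_rowsIndepMod_snocCol_le hpp (by omega) hBp.le z
          (by_contra fun h => hL ⟨p, hpp, hBp, h⟩)
    _ ≤ (m + 1) / (2 * B : ℝ) := by
        rw [nsmul_eq_mul, mul_one_div]
        gcongr
        exact_mod_cast hS

lemma boxFreq_not_rowsIndepMod_le {k n s p : ℕ} (hp : p.Prime) (h : k + s ≤ n) {B : ℕ}
    (hpB : p ≤ 2 * B) (z : Fin k × Fin n → ℤ) :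
    boxFreq z B (fun x => ¬ RowsIndepMod p (unvec x)) ≤
      2 ^ (k * n) * (k / (p : ℝ) ^ (s + 1)) := by
  have := Fact.mk hp
  have hcard := card_not_linearIndependent_div (ZMod p) (k := k) (n := n) (by omega)
  have hle := boxFreq_intCast_le z hpB fun r => ¬ LinearIndependent (ZMod p) (unvec r).row
  rw [ZMod.card] at hcard
  rw [hcard, Fintype.card_prod, Fintype.card_fin, Fintype.card_fin] at hle
  refine hle.trans ?_
  gcongr
  exact one_sub_fullRankDensity_le hp.one_le h

-- A zero determinant vanishes modulo a prime of size comparable to `B`, which exists by Bertrand.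
lemma tendsto_boxFreq_det_eq_zero {m : ℕ} (z : Fin m × Fin m → ℤ) :
    Tendsto (fun B : ℕ => boxFreq z B fun x => (unvec x).det = 0) atTop (nhds 0) := by
  refine squeeze_zero' (Eventually.of_forall fun B => boxFreq_nonneg z B _) ?_
    (tendsto_const_div_atTop_nhds_zero_nat (2 ^ (m * m) * m : ℝ))
  filter_upwards [eventually_ne_atTop 0] with B hB
  obtain ⟨p, hp, hBp, hpB⟩ := Nat.exists_prime_lt_and_le_two_mul B hB
  calc boxFreq z B (fun x => (unvec x).det = 0)
      ≤ boxFreq z B (fun x => ¬ RowsIndepMod p (unvec x)) := boxFreq_mono fun x _ hx => by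
        rw [rowsIndepMod_iff_not_dvd_det hp, hx, not_not]
        exact dvd_zero _
    _ ≤ 2 ^ (m * m) * (m / (p : ℝ) ^ (0 + 1)) :=
        boxFreq_not_rowsIndepMod_le hp (add_zero m).le hpB z
    _ ≤ 2 ^ (m * m) * m / B := by
        rw [zero_add, pow_one, mul_div_assoc]
        gcongr

lemma boxFreq_dependentBeyond_succ_le {m B : ℕ} (z : Fin (m + 1) × Fin (m + 2) → ℤ)
    (hz : ∀ y ∈ intBox (z ∘ Prod.map id Fin.castSucc) B, ∀ t, |y t| ≤ (2 * B : ℕ))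
    (hB : (m + 1).factorial < 2 * B) :
    boxFreq z B (fun x => DependentBeyond (2 * B) (unvec x)) ≤
      boxFreq (z ∘ Prod.map id Fin.castSucc) B (fun x => (unvec x).det = 0) +
      boxFreq (z ∘ Prod.map Fin.castSucc Fin.castSucc) B
        (fun x => DependentBeyond (2 * B) (unvec x)) + (m + 1) / (2 * B : ℝ) := by
  have hB0 : B ≠ 0 := by rintro rfl; simp at hB
  rw [← boxFreq_comp_injective
      (Function.injective_id.prodMap (Fin.castSucc_injective _)) z hB0 fun x => (unvec x).det = 0,
    ← boxFreq_comp_injective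
      ((Fin.castSucc_injective _).prodMap (Fin.castSucc_injective _)) z hB0
      fun x => DependentBeyond (2 * B) (unvec x)]
  refine (boxFreq_mono fun x _ hx => ?_).trans <| (boxFreq_or_le _ _).trans <|
    add_le_add (boxFreq_or_le _ _) <| boxFreq_unvec_le (z := z) hB0
      (P := fun M => (M.submatrix id Fin.castSucc).det ≠ 0 ∧
        ¬ DependentBeyond (2 * B) (M.submatrix Fin.castSucc Fin.castSucc) ∧
        DependentBeyond (2 * B) M) fun y hy => ?_
  · by_cases hdet : ((unvec x).submatrix id Fin.castSucc).det = 0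
    · exact Or.inl (Or.inl hdet)
    by_cases htop : DependentBeyond (2 * B) ((unvec x).submatrix Fin.castSucc Fin.castSucc)
    · exact Or.inl (Or.inr htop)
    · exact Or.inr ⟨hdet, htop, hx⟩
  · have htop : ∀ r, (snocCol (unvec y) r).submatrix Fin.castSucc Fin.castSucc =
        (unvec y).submatrix Fin.castSucc id := fun r =>
      congrArg (Matrix.submatrix · Fin.castSucc id) (snocCol_submatrix_castSucc (unvec y) r)
    simp only [snocCol_submatrix_castSucc, htop]
    by_cases hy' : (unvec y).det ≠ 0 ∧
        ¬ DependentBeyond (2 * B) ((unvec y).submatrix Fin.castSucc id)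
    · exact (boxFreq_mono fun r _ hr => hr.2.2).trans <|
        boxFreq_dependentBeyond_snocCol_le _ hy'.1 (fun i j => hz y hy (i, j)) hB hy'.2
    · rw [boxFreq_eq_zero fun r _ hr => hy' ⟨hr.1, hr.2.1⟩]
      positivity

lemma tendsto_boxFreq_dependentBeyond_succ {m : ℕ} (z : Fin m × Fin (m + 1) → ℤ) :
    Tendsto (fun B : ℕ => boxFreq z B fun x => DependentBeyond (2 * B) (unvec x)) atTop
      (nhds 0) := by
  induction m with
  | zero =>
    refine tendsto_const_nhds.congr fun B => (boxFreq_eq_zero ?_).symm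
    rintro x _ ⟨p, -, -, hx⟩
    exact hx linearIndependent_empty_type
  | succ m ih =>
    have hlim := ((tendsto_boxFreq_det_eq_zero (z ∘ Prod.map id Fin.castSucc)).add
      (ih (z ∘ Prod.map Fin.castSucc Fin.castSucc))).add
      (tendsto_const_div_atTop_nhds_zero_nat ((m + 1) / 2 : ℝ))
    simp only [add_zero, div_div] at hlim
    refine squeeze_zero' (Eventually.of_forall fun B => boxFreq_nonneg z B _) ?_ hlim
    filter_upwards [eventually_abs_le_of_mem_intBox (z ∘ Prod.map id Fin.castSucc),
      eventually_gt_atTop (m + 1).factorial] with B hz hB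
    exact boxFreq_dependentBeyond_succ_le z hz (by omega)

lemma tendsto_boxFreq_dependentBeyond {k n : ℕ} (hkn : k < n) (z : Fin k × Fin n → ℤ) :
    Tendsto (fun B : ℕ => boxFreq z B fun x => DependentBeyond (2 * B) (unvec x)) atTop
      (nhds 0) := by
  have hinj : Function.Injective (Prod.map (id : Fin k → Fin k) (Fin.castLE hkn)) :=
    Function.injective_id.prodMap (Fin.castLE_injective _)
  have hle : ∀ᶠ B : ℕ in atTop, boxFreq z B (fun x => DependentBeyond (2 * B) (unvec x)) ≤
      boxFreq (z ∘ Prod.map id (Fin.castLE hkn)) B fun x => DependentBeyond (2 * B) (unvec x) := by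
    filter_upwards [eventually_ne_atTop 0] with B hB
    rw [← boxFreq_comp_injective hinj z hB fun x => DependentBeyond (2 * B) (unvec x)]
    refine boxFreq_mono fun x _ ⟨p, hp, hBp, hx⟩ => ⟨p, hp, hBp, fun h => hx ?_⟩
    exact RowsIndepMod.of_submatrix (M := unvec x) (f := Fin.castLE hkn) h
  exact squeeze_zero' (Eventually.of_forall fun B => boxFreq_nonneg z B _) hle
    (tendsto_boxFreq_dependentBeyond_succ (z ∘ Prod.map id (Fin.castLE hkn)))

lemma boxFreq_dependentBeyond_le {k n : ℕ} (hkn : k < n) (z : Fin k × Fin n → ℤ) (N B : ℕ) :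
    boxFreq z B (fun x => DependentBeyond N (unvec x)) ≤
      2 ^ (k * n) * k * (2 / (N + 1)) +
        boxFreq z B (fun x => DependentBeyond (2 * B) (unvec x)) := by
  let S := (Finset.Ioo N (2 * B + 1)).filter Nat.Prime
  have hsplit : boxFreq z B (fun x => DependentBeyond N (unvec x)) ≤ boxFreq z B fun x =>
      (∃ p ∈ S, ¬ RowsIndepMod p (unvec x)) ∨ DependentBeyond (2 * B) (unvec x) := by
    refine boxFreq_mono fun x _ ⟨p, hp, hNp, hx⟩ => ?_
    rcases lt_or_ge (2 * B) p with hBp | hpB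
    · exact Or.inr ⟨p, hp, hBp, hx⟩
    · exact Or.inl ⟨p, by simp [S, hp, hNp, Nat.lt_succ_of_le hpB], hx⟩
  refine (hsplit.trans (boxFreq_or_le _ _)).trans (add_le_add_left ?_ _)
  calc boxFreq z B (fun x => ∃ p ∈ S, ¬ RowsIndepMod p (unvec x))
      ≤ ∑ p ∈ S, boxFreq z B (fun x => ¬ RowsIndepMod p (unvec x)) := boxFreq_exists_le_sum _ _
    _ ≤ ∑ p ∈ S, 2 ^ (k * n) * k * ((p : ℝ) ^ 2)⁻¹ := Finset.sum_le_sum fun p hp => by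
        simp only [S, Finset.mem_filter, Finset.mem_Ioo, Nat.lt_succ_iff] at hp
        rw [mul_assoc, ← div_eq_mul_inv]
        exact boxFreq_not_rowsIndepMod_le hp.2 hkn hp.1.2 z
    _ ≤ ∑ p ∈ Finset.Ioo N (2 * B + 1), 2 ^ (k * n) * k * ((p : ℝ) ^ 2)⁻¹ :=
        Finset.sum_le_sum_of_subset_of_nonneg (Finset.filter_subset _ _) fun _ _ _ => by positivity
    _ ≤ 2 ^ (k * n) * k * (2 / (N + 1)) := by
        rw [← Finset.mul_sum]
        gcongr
        exact sum_Ioo_inv_sq_le N (2 * B + 1)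

end LargePrimes

/-! ### The density of primitive matrices -/

section Density

lemma tendsto_boxFreq_forall_primesBelow {k n : ℕ} (hkn : k ≤ n) (z : Fin k × Fin n → ℤ) (N : ℕ) :
    Tendsto (fun B : ℕ => boxFreq z B fun x => ∀ p ∈ N.primesBelow, RowsIndepMod p (unvec x)) atTop
      (nhds (∏ p ∈ N.primesBelow, fullRankDensity k n p)) := by
  have hprime : ∀ p : N.primesBelow, Fact (p : ℕ).Prime := fun p =>
    ⟨Nat.prime_of_mem_primesBelow p.2⟩
  have hcoprime : Pairwise (Function.onFun Nat.Coprime fun p : N.primesBelow => (p : ℕ)) :=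
    fun p q hpq =>
      (Nat.coprime_primes (hprime p).out (hprime q).out).2 fun h => hpq (Subtype.ext h)
  have hlim := tendsto_boxFreq_forall_intCast hcoprime z fun p r =>
    LinearIndependent (ZMod p) (unvec r).row
  have hcard := fun p : N.primesBelow => card_linearIndependent_div (ZMod p) hkn
  simp only [ZMod.card] at hcard
  simp only [hcard, Finset.prod_coe_sort, Subtype.forall] at hlim
  exact hlim

lemma tendsto_prod_primesBelow_one_sub_inv_pow {k : ℕ} (hk : 2 ≤ k) :
    Tendsto (fun N : ℕ => ∏ p ∈ N.primesBelow, (1 - ((p : ℝ) ^ k)⁻¹)) atTop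
      (nhds (zetaR k)⁻¹) := by
  let f : ℕ →*₀ ℝ :=
    { toFun := fun n => ((n : ℝ) ^ k)⁻¹
      map_zero' := by simp [show k ≠ 0 by omega]
      map_one' := by simp
      map_mul' := fun x y => by rw [Nat.cast_mul, mul_pow, mul_inv] }
  have hsum : Summable f := Real.summable_nat_pow_inv.2 hk
  have hzeta : ∑' n, f n = zetaR k := by
    rw [hsum.tsum_eq_zero_add, map_zero, zero_add, zetaR]
    simp [f]
  have heuler := EulerProduct.eulerProduct_completely_multiplicative hsum.norm
  rw [hzeta] at heuler
  refine (heuler.inv₀ (zero_lt_one.trans_le (one_le_zetaR hk)).ne').congr fun N => ?_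
  simp only [← Finset.prod_inv_distrib, inv_inv]
  rfl

lemma tendsto_prod_primesBelow_fullRankDensity {k n : ℕ} (hkn : k < n) :
    Tendsto (fun N : ℕ => ∏ p ∈ N.primesBelow, fullRankDensity k n p) atTop
      (nhds (∏ i : Fin k, zetaR (n - i))⁻¹) := by
  simp only [fullRankDensity, Finset.prod_comm (t := (Finset.univ : Finset (Fin k))),
    ← Finset.prod_inv_distrib]
  exact tendsto_finsetProd _ fun i _ => tendsto_prod_primesBelow_one_sub_inv_pow (by omega)

lemma abs_boxFreq_isPrimitive_sub_le {k n : ℕ} (hkn : k < n) (z : Fin k × Fin n → ℤ) (N B : ℕ) :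
    |boxFreq z B (fun x => IsPrimitive (unvec x)) -
      boxFreq z B (fun x => ∀ p ∈ (N + 1).primesBelow, RowsIndepMod p (unvec x))| ≤
      2 ^ (k * n) * k * (2 / (N + 1)) +
        boxFreq z B (fun x => DependentBeyond (2 * B) (unvec x)) := by
  have hle : boxFreq z B (fun x => IsPrimitive (unvec x)) ≤
      boxFreq z B (fun x => ∀ p ∈ (N + 1).primesBelow, RowsIndepMod p (unvec x)) :=
    boxFreq_mono fun x _ hx p hp => hx p (Nat.prime_of_mem_primesBelow hp)
  have hge : boxFreq z B (fun x => ∀ p ∈ (N + 1).primesBelow, RowsIndepMod p (unvec x)) ≤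
      boxFreq z B fun x => IsPrimitive (unvec x) ∨ DependentBeyond N (unvec x) := by
    refine boxFreq_mono fun x _ hx => or_iff_not_imp_right.2 fun hN p hp => ?_
    rcases Nat.lt_or_ge N p with hNp | hpN
    · exact by_contra fun h => hN ⟨p, hp, hNp, h⟩
    · exact hx p (Nat.mem_primesBelow.2 ⟨Nat.lt_succ_of_le hpN, hp⟩)
  rw [abs_sub_comm, abs_of_nonneg (sub_nonneg.2 hle), sub_le_iff_le_add']
  refine (hge.trans (boxFreq_or_le _ _)).trans ?_
  gcongr
  exact boxFreq_dependentBeyond_le hkn z N B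

lemma tendsto_boxFreq_isPrimitive {k n : ℕ} (hkn : k < n) (z : Fin k × Fin n → ℤ) :
    Tendsto (fun B : ℕ => boxFreq z B fun x => IsPrimitive (unvec x)) atTop
      (nhds (∏ i : Fin k, zetaR (n - i))⁻¹) := by
  have herror : Tendsto (fun q : ℕ × ℕ => 2 ^ (k * n) * k * (2 / ((q.1 : ℝ) + 1)) +
      boxFreq z q.2 fun x => DependentBeyond (2 * q.2) (unvec x)) (atTop ×ˢ atTop) (nhds 0) := by
    have hsmall : Tendsto (fun N : ℕ => 2 / ((N : ℝ) + 1)) atTop (nhds 0) :=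
      (tendsto_natCast_atTop_atTop.atTop_add tendsto_const_nhds).const_div_atTop 2
    simpa using ((hsmall.const_mul (2 ^ (k * n) * k : ℝ)).comp tendsto_fst).add
      ((tendsto_boxFreq_dependentBeyond hkn z).comp tendsto_snd)
  have hunif : TendstoUniformlyOnFilter
      (fun N B : ℕ => boxFreq z B fun x => ∀ p ∈ (N + 1).primesBelow, RowsIndepMod p (unvec x))
      (fun B => boxFreq z B fun x => IsPrimitive (unvec x)) atTop atTop :=
    Metric.tendstoUniformlyOnFilter_iff.2 fun ε hε => (herror.eventually_lt_const hε).mono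
      fun q hq => (abs_boxFreq_isPrimitive_sub_le hkn z q.1 q.2).trans_lt hq
  exact hunif.tendsto_of_eventually_tendsto
    (Eventually.of_forall fun N => tendsto_boxFreq_forall_primesBelow hkn.le z (N + 1))
    ((tendsto_prod_primesBelow_fullRankDensity hkn).comp (tendsto_add_atTop_nat 1))

lemma matCubeCount_div_eq_boxFreq {n m : ℕ} (S : Set (Matrix (Fin n) (Fin m) ℤ))
    (z : Matrix (Fin n) (Fin m) ℤ) (B : ℕ) :
    (matCubeCount S z B : ℝ) / (2 * (B : ℝ)) ^ (n * m) =
      boxFreq (Function.uncurry z) B fun x => unvec x ∈ S := by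
  classical
  rw [matCubeCount, boxFreq, Fintype.card_prod, Fintype.card_fin, Fintype.card_fin]
  congr 2
  refine Finset.card_equiv (Equiv.curry _ _ _).symm fun A => ?_
  simp only [Finset.mem_filter, mem_intBox, Fintype.mem_piFinset, Finset.mem_Ico, Prod.forall]
  rfl

theorem hasMatDensity_exists_isHNFOf_diag_eq_one (m : ℕ) :
    HasMatDensity {A : Matrix (Fin (m + 1)) (Fin (m + 1)) ℤ |
        ∃ H, IsHNFOf H A ∧ ∀ i : Fin m, H i.castSucc i.castSucc = 1}
      (∏ i : Fin m, zetaR (m + 1 - i))⁻¹ := by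
  intro z
  let f : Fin m × Fin (m + 1) → Fin (m + 1) × Fin (m + 1) := fun t => (t.2, t.1.castSucc)
  have hf : Function.Injective f := fun s t h =>
    Prod.ext (Fin.castSucc_injective m (congrArg Prod.snd h)) (congrArg Prod.fst h)
  refine (tendsto_boxFreq_isPrimitive m.lt_succ_self (Function.uncurry z ∘ f)).congr' ?_
  filter_upwards [eventually_ne_atTop 0] with B hB
  rw [matCubeCount_div_eq_boxFreq,
    ← boxFreq_comp_injective hf _ hB fun x => IsPrimitive (unvec x)]
  simp only [Set.mem_ofPred_eq, exists_isHNFOf_diag_eq_one_iff]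
  rfl

end Density

/-- Matrices whose HNF diagonal is all `1`s except possibly the last entry have
density `(ζ(n)⋯ζ(2))⁻¹`, and this converges to `(∏_{j≥2} ζ(j))⁻¹ ≈ 0.43575707677`
as `n → ∞`. -/
theorem density_random_lattice_bases :
    (∀ n : ℕ, 2 ≤ n →
      HasMatDensity
        {A : Matrix (Fin n) (Fin n) ℤ | ∃ H, IsHNFOf H A ∧
          ∀ i : Fin n, (i : ℕ) < n - 1 → H i i = 1}
        (∏ i : Fin (n - 1), zetaR (n - (i : ℕ)))⁻¹) ∧
    Tendsto (fun n : ℕ => (∏ i : Fin (n - 1), zetaR (n - (i : ℕ)))⁻¹) atTop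
      (nhds (∏' j : ℕ, zetaR (j + 2))⁻¹) ∧
    |(∏' j : ℕ, zetaR (j + 2))⁻¹ - 0.43575707677| < 1 / 10 ^ 10 := by
  refine ⟨fun n hn => ?_, tendsto_inv_prod_zetaR, abs_inv_tprod_zetaR_sub_lt⟩
  obtain ⟨m, rfl⟩ : ∃ m, n = m + 1 := ⟨n - 1, by omega⟩
  have hdiag : ∀ H : Matrix (Fin (m + 1)) (Fin (m + 1)) ℤ,
      (∀ i : Fin (m + 1), (i : ℕ) < m + 1 - 1 → H i i = 1) ↔
        ∀ i : Fin m, H i.castSucc i.castSucc = 1 := fun H => by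
    simp [Fin.forall_fin_succ']
  simp only [hdiag]
  exact hasMatDensity_exists_isHNFOf_diag_eq_one m
end

section
/- Let u ∈ ℤ^n be a vector with coprime coordinates and d ≥ 1. The natural density of pairs (x,y) ∈ ℤ^n × ℤ^n with gcd(u·x, u·y) = d equals (d² ζ(2))^{-1}. -/
open Filter

open scoped Classical in
/-- Number of pairs of `S` in the product of cubes of side `2B` centered at `z`. -/
noncomputable def pairCubeCount {n : ℕ} (S : Set ((Fin n → ℤ) × (Fin n → ℤ)))
    (z : (Fin n → ℤ) × (Fin n → ℤ)) (B : ℕ) : ℕ :=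
  (Finset.filter (fun p => p ∈ S)
    ((Fintype.piFinset fun i => Finset.Ico (z.1 i - (B : ℤ)) (z.1 i + (B : ℤ))) ×ˢ
      (Fintype.piFinset fun i => Finset.Ico (z.2 i - (B : ℤ)) (z.2 i + (B : ℤ))))).card

/-- Natural density in `ℤ^n × ℤ^n ≅ ℤ^{2n}`, via cubes of arbitrary center. -/
def HasPairDensity {n : ℕ} (S : Set ((Fin n → ℤ) × (Fin n → ℤ))) (δ : ℝ) : Prop :=
  ∀ z : (Fin n → ℤ) × (Fin n → ℤ),
    Tendsto (fun B : ℕ => (pairCubeCount S z B : ℝ) / (2 * (B : ℝ)) ^ (2 * n))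
      atTop (nhds δ)

/-!
Bézout gives `w` with `u · w = 1`, so every `y` is uniquely `x + k • w` with `m ∣ u · x` and
`0 ≤ k < m`. As `k • w` moves a cube only by a bounded amount, the number `N` of points of the cube
of side `2B` about `z` with `m ∣ u · x` is squeezed between
`(2 (B - m W)) ^ n ≤ m * N ≤ (2 (B + m W)) ^ n`, where `W` bounds the coordinates of `w`. Hence `m`
divides both `u · x` and `v · y` with density `1 / m ^ 2`. Möbius inversion turns these densities
into `∑ k, μ k / (k d) ^ 2` for the event `gcd = d`. Limit and sum may be exchanged by dominated
convergence: the upper bound above is uniformly `O(B ^ n)` as long as `m = O(B)`, and a larger `m`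
cannot divide a nonzero gcd. Pairs with gcd `0` have density zero but are divisible by every `m`,
which is why the sieve counts `m ∈ Nat.divisors (gcd)` instead of `m ∣ gcd`.
-/

open Finset
open scoped Matrix Topology

section Sieve

open scoped ArithmeticFunction.Moebius

lemma tsum_moebius_div_pow {k : ℕ} (hk : 1 < k) :
    ∑' n : ℕ, (μ n : ℝ) / (n : ℝ) ^ k = (zetaR k)⁻¹ := by
  have hre : 1 < (k : ℂ).re := by simpa using hk
  have hzeta : LSeries 1 k = (zetaR k : ℂ) := by
    rw [LSeries_one_eq_riemannZeta hre, zeta_eq_tsum_one_div_nat_add_one_cpow hre, zetaR]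
    push_cast
    simp only [Complex.cpow_natCast]
  have hmoebius : LSeries (fun n ↦ (μ n : ℂ)) k = (∑' n : ℕ, (μ n : ℝ) / (n : ℝ) ^ k : ℝ) := by
    rw [LSeries, Complex.ofReal_tsum]
    refine tsum_congr fun n ↦ ?_
    rcases eq_or_ne n 0 with rfl | hn
    · simp
    · rw [LSeries.term_of_ne_zero hn, Complex.cpow_natCast]
      push_cast
      rfl
  have hprod := LSeries_one_mul_Lseries_moebius hre
  rw [hzeta, hmoebius] at hprod
  exact eq_inv_of_mul_eq_one_right (mod_cast hprod)

lemma tsum_moebius_mul_inv_sq (d : ℕ) :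
    ∑' k : ℕ, (μ k : ℝ) * (((k * d : ℕ) : ℝ) ^ 2)⁻¹ = ((d : ℝ) ^ 2 * zetaR 2)⁻¹ := by
  rw [mul_inv, ← tsum_moebius_div_pow one_lt_two, ← tsum_mul_left]
  refine tsum_congr fun k ↦ ?_
  rw [Nat.cast_mul, mul_pow, mul_inv, div_eq_mul_inv]
  ring

lemma hasSum_moebius_mul_indicator_mem_divisors {d : ℕ} (hd : 0 < d) (g : ℕ) :
    HasSum (fun k ↦ (μ k : ℝ) * if k * d ∈ g.divisors then 1 else 0)
      (if g = d then 1 else 0) := by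
  by_cases hdg : d ∈ g.divisors
  · obtain ⟨h, rfl⟩ := Nat.dvd_of_mem_divisors hdg
    have hmem (k : ℕ) : k * d ∈ (d * h).divisors ↔ k ∈ h.divisors := by
      rw [Nat.mem_divisors, Nat.mem_divisors, mul_comm d h, Nat.mul_dvd_mul_iff_right hd,
        and_congr_right_iff]
      exact fun _ ↦ by simp [hd.ne']
    have hsum : ∑ k ∈ h.divisors, (μ k : ℝ) = if d * h = d then 1 else 0 := by
      rw [← Int.cast_sum, ← ArithmeticFunction.coe_mul_zeta_apply,
        ArithmeticFunction.moebius_mul_coe_zeta, ArithmeticFunction.one_apply]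
      simp [hd.ne']
    simp only [hmem, mul_ite, mul_one, mul_zero]
    rw [← hsum, ← sum_congr rfl fun k hk ↦ if_pos hk]
    exact hasSum_sum_of_ne_finset_zero fun k hk ↦ if_neg hk
  · have hgd : g ≠ d := by
      rintro rfl
      exact hdg (Nat.mem_divisors_self _ hd.ne')
    have hmem (k : ℕ) : k * d ∉ g.divisors := fun hk ↦
      hdg (Nat.mem_divisors.2 ⟨dvd_of_mul_left_dvd (Nat.dvd_of_mem_divisors hk),
        Nat.ne_zero_of_mem_divisors hk⟩)
    simpa only [hmem, hgd, if_false, mul_zero] using hasSum_zero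

lemma hasSum_moebius_mul_card_filter_mem_divisors {α : Type*} (s : Finset α) (g : α → ℕ)
    {d : ℕ} (hd : 0 < d) :
    HasSum (fun k ↦ (μ k : ℝ) * #{a ∈ s | k * d ∈ (g a).divisors}) #{a ∈ s | g a = d} := by
  simpa only [← mul_sum, sum_boole] using
    hasSum_sum fun a (_ : a ∈ s) ↦ hasSum_moebius_mul_indicator_mem_divisors hd (g a)

theorem tendsto_card_filter_eq_of_mem_divisors {α β : Type*} {l : Filter β} {s : β → Finset α}
    {g : α → ℕ} {c : β → ℝ} {δ bound : ℕ → ℝ} (hbound : Summable bound)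
    (hlim : ∀ m, 0 < m →
      Tendsto (fun b ↦ #{a ∈ s b | m ∈ (g a).divisors} / c b) l (𝓝 (δ m)))
    (hle : ∀ᶠ b in l, ∀ m, 0 < m → |#{a ∈ s b | m ∈ (g a).divisors} / c b| ≤ bound m)
    {d : ℕ} (hd : 0 < d) :
    Tendsto (fun b ↦ #{a ∈ s b | g a = d} / c b) l (𝓝 (∑' k, μ k * δ (k * d))) := by
  have hsieve (b : β) : ∑' k, μ k * (#{a ∈ s b | k * d ∈ (g a).divisors} / c b) =
      #{a ∈ s b | g a = d} / c b := by
    simpa only [mul_div_assoc] using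
      ((hasSum_moebius_mul_card_filter_mem_divisors (s b) g hd).div_const (c b)).tsum_eq
  simp only [← hsieve]
  refine tendsto_tsum_of_dominated_convergence
    (hbound.abs.comp_injective (mul_left_injective₀ hd.ne')) (fun k ↦ ?_) (hle.mono fun b hb k ↦ ?_)
  · rcases k.eq_zero_or_pos with rfl | hk
    · simpa using tendsto_const_nhds
    · exact (hlim _ (mul_pos hk hd)).const_mul _
  · rcases k.eq_zero_or_pos with rfl | hk
    · simp
    · have hμ : |(μ k : ℝ)| ≤ 1 := mod_cast ArithmeticFunction.abs_moebius_le_one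
      rw [Real.norm_eq_abs, abs_mul]
      exact (mul_le_of_le_one_left (abs_nonneg _) hμ).trans
        ((hb _ (mul_pos hk hd)).trans (le_abs_self _))

lemma card_filter_mem_divisors_add_card_filter_zero_dvd {α : Type*} (s : Finset α) (g : α → ℕ)
    (m : ℕ) :
    #{a ∈ s | m ∈ (g a).divisors} + #{a ∈ s | 0 ∣ g a} = #{a ∈ s | m ∣ g a} := by
  rw [← card_filter_add_card_filter_not (s := {a ∈ s | m ∣ g a}) fun a ↦ g a ≠ 0,
    filter_filter, filter_filter]
  congr 2 <;> refine filter_congr fun a _ ↦ ?_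
  · exact Nat.mem_divisors
  · rw [zero_dvd_iff, not_not, iff_and_self]
    exact fun h ↦ h ▸ dvd_zero m

end Sieve

section Cube

lemma exists_nat_forall_abs_le {ι : Type*} [Finite ι] (w : ι → ℤ) : ∃ W : ℕ, ∀ i, |w i| ≤ W := by
  have := Fintype.ofFinite ι
  refine ⟨univ.sup fun i ↦ (w i).natAbs, fun i ↦ ?_⟩
  rw [Int.abs_eq_natAbs]
  exact_mod_cast le_sup (f := fun i ↦ (w i).natAbs) (mem_univ i)

variable {ι : Type*} [Fintype ι] {u w x z : ι → ℤ} {m B W : ℕ}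

lemma exists_dotProduct_eq_one (hu : univ.gcd u = 1) : ∃ w : ι → ℤ, u ⬝ᵥ w = 1 :=
  let ⟨w, hw⟩ := univ.gcd_eq_sum_mul u
  ⟨w, hw.symm.trans hu⟩

lemma dotProduct_add_smul_of_eq_one {R : Type*} [CommSemiring R] {u w : ι → R} (hw : u ⬝ᵥ w = 1)
    (x : ι → R) (k : R) :
    u ⬝ᵥ (x + k • w) = u ⬝ᵥ x + k := by
  rw [dotProduct_add, dotProduct_smul, hw, smul_eq_mul, mul_one]

variable [DecidableEq ι]

/-- The cube of side `2B` centred at `z`, half-open as in `pairCubeCount`. -/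
noncomputable def latticeCube (z : ι → ℤ) (B : ℕ) : Finset (ι → ℤ) :=
  Fintype.piFinset fun i ↦ Ico (z i - B) (z i + B)

/-- The points `x` of a cube at which `u · x` is a multiple of `m`; for `m = 0` these are the
points with `u · x = 0`. -/
noncomputable def cubeMultiples (u z : ι → ℤ) (m B : ℕ) : Finset (ι → ℤ) :=
  {x ∈ latticeCube z B | (m : ℤ) ∣ u ⬝ᵥ x}

lemma mem_latticeCube : x ∈ latticeCube z B ↔ ∀ i, z i - B ≤ x i ∧ x i < z i + B := by
  simp [latticeCube]

lemma mem_cubeMultiples :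
    x ∈ cubeMultiples u z m B ↔ x ∈ latticeCube z B ∧ (m : ℤ) ∣ u ⬝ᵥ x :=
  mem_filter

lemma card_latticeCube (z : ι → ℤ) (B : ℕ) : #(latticeCube z B) = (2 * B) ^ Fintype.card ι := by
  have hside (i : ι) : #(Ico (z i - B) (z i + B)) = 2 * B := by
    rw [Int.card_Ico]
    lia
  simp [latticeCube, hside]

lemma add_smul_mem_latticeCube (hx : x ∈ latticeCube z B) (hW : ∀ i, |w i| ≤ W) {k : ℤ}
    (hk : |k| ≤ m) : x + k • w ∈ latticeCube z (B + m * W) := by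
  rw [mem_latticeCube] at hx ⊢
  intro i
  have hkw : |k * w i| ≤ m * W := by
    rw [abs_mul]
    exact mul_le_mul hk (hW i) (abs_nonneg _) (by positivity)
  have := abs_le.1 hkw
  have := hx i
  simp only [Pi.add_apply, Pi.smul_apply, smul_eq_mul]
  push_cast
  constructor <;> linarith

lemma mul_card_cubeMultiples_le (hw : u ⬝ᵥ w = 1) (hW : ∀ i, |w i| ≤ W) (z : ι → ℤ) (m B : ℕ) :
    m * #(cubeMultiples u z m B) ≤ (2 * (B + m * W)) ^ Fintype.card ι := by
  have hcard : #(Ico (0 : ℤ) m ×ˢ cubeMultiples u z m B) = m * #(cubeMultiples u z m B) := by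
    simp
  rw [← hcard, ← card_latticeCube z]
  -- `(k, x) ↦ x + k • w` is injective since `u · x + k` determines `k` modulo `m`.
  refine card_le_card_of_injOn (fun p ↦ p.2 + p.1 • w) ?_ ?_
  · rintro ⟨k, x⟩ hp
    obtain ⟨hk, hx⟩ := mem_product.1 hp
    rw [mem_Ico] at hk
    exact add_smul_mem_latticeCube (mem_cubeMultiples.1 hx).1 hW (abs_le.2 (by lia))
  · rintro ⟨k, x⟩ hp ⟨l, y⟩ hq (h : x + k • w = y + l • w)
    obtain ⟨hk, hx⟩ := mem_product.1 hp
    obtain ⟨hl, hy⟩ := mem_product.1 hq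
    rw [mem_Ico] at hk hl
    have hdot : u ⬝ᵥ x + k = u ⬝ᵥ y + l := by
      simpa only [dotProduct_add_smul_of_eq_one hw] using congrArg (u ⬝ᵥ ·) h
    have hdvd : (m : ℤ) ∣ k - l := by
      rw [show k - l = u ⬝ᵥ y - u ⬝ᵥ x by linarith]
      exact dvd_sub (mem_cubeMultiples.1 hy).2 (mem_cubeMultiples.1 hx).2
    obtain rfl : k = l :=
      sub_eq_zero.1 (Int.eq_zero_of_abs_lt_dvd hdvd (abs_lt.2 (by lia)))
    rw [add_right_cancel h]

lemma le_mul_card_cubeMultiples (hw : u ⬝ᵥ w = 1) (hW : ∀ i, |w i| ≤ W) (z : ι → ℤ)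
    (hm : 0 < m) (B : ℕ) :
    (2 * B) ^ Fintype.card ι ≤ m * #(cubeMultiples u z m (B + m * W)) := by
  have hcard : #(Ico (0 : ℤ) m ×ˢ cubeMultiples u z m (B + m * W)) =
      m * #(cubeMultiples u z m (B + m * W)) := by
    simp
  rw [← hcard, ← card_latticeCube z]
  refine card_le_card_of_injOn (fun y ↦ (u ⬝ᵥ y % m, y + (-(u ⬝ᵥ y % m)) • w)) ?_ ?_
  · intro y hy
    have hnonneg := Int.emod_nonneg (u ⬝ᵥ y) (b := m) (by lia)
    have hlt := Int.emod_lt_of_pos (u ⬝ᵥ y) (b := m) (by lia)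
    refine mem_product.2 ⟨mem_Ico.2 ⟨hnonneg, hlt⟩, mem_cubeMultiples.2
      ⟨add_smul_mem_latticeCube hy hW (abs_le.2 (by lia)), ?_⟩⟩
    rw [dotProduct_add_smul_of_eq_one hw, ← sub_eq_add_neg]
    exact Int.dvd_self_sub_emod
  · intro x _ y _ h
    obtain ⟨hres, hpt⟩ := Prod.ext_iff.1 h
    dsimp only at hres hpt
    rw [hres] at hpt
    exact add_right_cancel hpt

lemma tendsto_two_mul_add_pow_div (c : ℝ) (n : ℕ) :
    Tendsto (fun B : ℕ ↦ (2 * ((B : ℝ) + c)) ^ n / (2 * (B : ℝ)) ^ n) atTop (𝓝 1) := by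
  have hlim : Tendsto (fun B : ℕ ↦ (1 + c / (B : ℝ)) ^ n) atTop (𝓝 1) := by
    simpa using ((tendsto_const_div_atTop_nhds_zero_nat c).const_add 1).pow n
  refine hlim.congr' ?_
  filter_upwards [eventually_gt_atTop 0] with B hB
  rw [← div_pow]
  congr 1
  field_simp

lemma tendsto_card_cubeMultiples_div (hu : univ.gcd u = 1) (z : ι → ℤ) (hm : 0 < m) :
    Tendsto (fun B : ℕ ↦ (#(cubeMultiples u z m B) : ℝ) / (2 * (B : ℝ)) ^ Fintype.card ι)
      atTop (𝓝 (m : ℝ)⁻¹) := by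
  obtain ⟨w, hw⟩ := exists_dotProduct_eq_one hu
  obtain ⟨W, hW⟩ := exists_nat_forall_abs_le w
  have hscaled : Tendsto (fun B : ℕ ↦
      (m * #(cubeMultiples u z m B) : ℝ) / (2 * (B : ℝ)) ^ Fintype.card ι) atTop (𝓝 1) := by
    refine tendsto_of_tendsto_of_tendsto_of_le_of_le'
      (tendsto_two_mul_add_pow_div (-(m * W)) (Fintype.card ι))
      (tendsto_two_mul_add_pow_div (m * W) (Fintype.card ι)) ?_ (Eventually.of_forall fun B ↦ ?_)
    · filter_upwards [eventually_ge_atTop (m * W)] with B hB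
      obtain ⟨A, rfl⟩ := Nat.exists_eq_add_of_le' hB
      gcongr
      push_cast
      rw [add_neg_cancel_right]
      exact_mod_cast le_mul_card_cubeMultiples hw hW z hm A
    · gcongr
      exact_mod_cast mul_card_cubeMultiples_le hw hW z m B
  have hm' : (m : ℝ) ≠ 0 := by positivity
  simpa [mul_div_assoc, hm'] using hscaled.const_mul (m : ℝ)⁻¹

lemma cubeMultiples_zero_subset (u z : ι → ℤ) (m B : ℕ) :
    cubeMultiples u z 0 B ⊆ cubeMultiples u z m B := fun _ hx ↦
  have ⟨hcube, hzero⟩ := mem_cubeMultiples.1 hx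
  mem_cubeMultiples.2 ⟨hcube, (Int.natCast_dvd_natCast.2 (dvd_zero m)).trans hzero⟩

lemma tendsto_card_cubeMultiples_zero_div (hu : univ.gcd u = 1) (z : ι → ℤ) :
    Tendsto (fun B : ℕ ↦ (#(cubeMultiples u z 0 B) : ℝ) / (2 * (B : ℝ)) ^ Fintype.card ι)
      atTop (𝓝 0) := by
  refine tendsto_order.2 ⟨fun a ha ↦ Eventually.of_forall fun B ↦ ha.trans_le (by positivity),
    fun ε hε ↦ ?_⟩
  obtain ⟨m, hm⟩ := exists_nat_one_div_lt hε
  have hlim := tendsto_card_cubeMultiples_div hu z m.succ_pos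
  filter_upwards [hlim.eventually_lt_const (by simpa using hm)] with B hB
  refine lt_of_le_of_lt ?_ hB
  gcongr
  exact cubeMultiples_zero_subset u z _ B

lemma exists_card_cubeMultiples_div_le (hu : univ.gcd u = 1) (z : ι → ℤ) (K : ℕ) :
    ∃ C : ℝ, ∀ m B : ℕ, 0 < m → 0 < B → m ≤ K * B →
      (#(cubeMultiples u z m B) : ℝ) / (2 * (B : ℝ)) ^ Fintype.card ι ≤ C / m := by
  obtain ⟨w, hw⟩ := exists_dotProduct_eq_one hu
  obtain ⟨W, hW⟩ := exists_nat_forall_abs_le w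
  refine ⟨(1 + K * W) ^ Fintype.card ι, fun m B hm hB hmB ↦ ?_⟩
  rw [div_le_div_iff₀ (by positivity) (by positivity), ← mul_pow, mul_comm]
  calc (m * #(cubeMultiples u z m B) : ℝ)
      ≤ (2 * (B + m * W)) ^ Fintype.card ι := mod_cast mul_card_cubeMultiples_le hw hW z m B
    _ ≤ (2 * (B + (K * B) * W)) ^ Fintype.card ι := by
      gcongr
      exact_mod_cast hmB
    _ = ((1 + K * W) * (2 * B)) ^ Fintype.card ι := by ring

lemma exists_natAbs_dotProduct_le (u z : ι → ℤ) :
    ∃ K : ℕ, ∀ B : ℕ, 0 < B → ∀ x ∈ latticeCube z B, (u ⬝ᵥ x).natAbs ≤ K * B := by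
  refine ⟨∑ i, (u i).natAbs * ((z i).natAbs + 1), fun B hB x hx ↦ ?_⟩
  refine (Int.natAbs_sum_le _ _).trans ?_
  rw [sum_mul]
  refine sum_le_sum fun i _ ↦ ?_
  rw [Int.natAbs_mul, mul_assoc]
  have hxz : (x i).natAbs ≤ (z i).natAbs + B := by
    have := mem_latticeCube.1 hx i
    lia
  gcongr
  calc (x i).natAbs ≤ (z i).natAbs + B := hxz
    _ ≤ (z i).natAbs * B + B := by gcongr; exact Nat.le_mul_of_pos_right _ hB
    _ = ((z i).natAbs + 1) * B := by ring

end Cube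

section Pairs

variable {ι : Type*} [Fintype ι] {u v : ι → ℤ} {m : ℕ}

/-- The gcd of `u · x` and `v · y` for a pair `p = (x, y)`. -/
def gcdDotProduct (u v : ι → ℤ) (p : (ι → ℤ) × (ι → ℤ)) : ℕ :=
  Int.gcd (u ⬝ᵥ p.1) (v ⬝ᵥ p.2)

lemma le_max_natAbs_of_mem_divisors_gcd {a b : ℤ} (hm : m ∈ (Int.gcd a b).divisors) :
    m ≤ max a.natAbs b.natAbs := by
  obtain ⟨hdvd, hne⟩ := Nat.mem_divisors.1 hm
  rcases eq_or_ne a 0 with rfl | ha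
  · rw [Int.gcd_zero_left] at hdvd hne
    exact le_max_of_le_right (Nat.le_of_dvd (Nat.pos_of_ne_zero hne) hdvd)
  · exact le_max_of_le_left (Nat.le_of_dvd (Int.natAbs_pos.2 ha)
      (hdvd.trans (Int.gcd_dvd_natAbs_left a b)))

variable [DecidableEq ι]

/-- The product of the cubes of side `2B` centred at the two components of `z`. -/
noncomputable def pairCube (z : (ι → ℤ) × (ι → ℤ)) (B : ℕ) : Finset ((ι → ℤ) × (ι → ℤ)) :=
  latticeCube z.1 B ×ˢ latticeCube z.2 B

lemma card_filter_dvd_gcdDotProduct (u v : ι → ℤ) (z : (ι → ℤ) × (ι → ℤ)) (m B : ℕ) :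
    #{p ∈ pairCube z B | m ∣ gcdDotProduct u v p} =
      #(cubeMultiples u z.1 m B) * #(cubeMultiples v z.2 m B) := by
  rw [cubeMultiples, cubeMultiples, ← card_product, ← filter_product]
  simp only [gcdDotProduct, Int.dvd_gcd_iff, pairCube]

lemma card_filter_dvd_gcdDotProduct_div (u v : ι → ℤ) (z : (ι → ℤ) × (ι → ℤ)) (m B : ℕ) :
    (#{p ∈ pairCube z B | m ∣ gcdDotProduct u v p} : ℝ) / (2 * (B : ℝ)) ^ (2 * Fintype.card ι) =
      #(cubeMultiples u z.1 m B) / (2 * (B : ℝ)) ^ Fintype.card ι *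
        (#(cubeMultiples v z.2 m B) / (2 * (B : ℝ)) ^ Fintype.card ι) := by
  rw [card_filter_dvd_gcdDotProduct, Nat.cast_mul, div_mul_div_comm, ← pow_add, ← two_mul]

lemma tendsto_card_filter_mem_divisors_div (hu : univ.gcd u = 1) (hv : univ.gcd v = 1)
    (z : (ι → ℤ) × (ι → ℤ)) (hm : 0 < m) :
    Tendsto (fun B : ℕ ↦ (#{p ∈ pairCube z B | m ∈ (gcdDotProduct u v p).divisors} : ℝ) /
      (2 * (B : ℝ)) ^ (2 * Fintype.card ι)) atTop (𝓝 ((m : ℝ) ^ 2)⁻¹) := by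
  have hdvd := (tendsto_card_cubeMultiples_div hu z.1 hm).mul
    (tendsto_card_cubeMultiples_div hv z.2 hm)
  have hzero := (tendsto_card_cubeMultiples_zero_div hu z.1).mul
    (tendsto_card_cubeMultiples_zero_div hv z.2)
  simp only [← card_filter_dvd_gcdDotProduct_div] at hdvd hzero
  rw [sq, mul_inv, ← sub_zero ((m : ℝ)⁻¹ * (m : ℝ)⁻¹), ← mul_zero (0 : ℝ)]
  refine (hdvd.sub hzero).congr fun B ↦ ?_
  rw [← card_filter_mem_divisors_add_card_filter_zero_dvd, Nat.cast_add, add_div,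
    add_sub_cancel_right]

lemma exists_card_filter_mem_divisors_div_le (hu : univ.gcd u = 1) (hv : univ.gcd v = 1)
    (z : (ι → ℤ) × (ι → ℤ)) :
    ∃ C : ℝ, ∀ m B : ℕ, 0 < m → 0 < B →
      (#{p ∈ pairCube z B | m ∈ (gcdDotProduct u v p).divisors} : ℝ) /
        (2 * (B : ℝ)) ^ (2 * Fintype.card ι) ≤ C * ((m : ℝ) ^ 2)⁻¹ := by
  obtain ⟨K₁, hK₁⟩ := exists_natAbs_dotProduct_le u z.1
  obtain ⟨K₂, hK₂⟩ := exists_natAbs_dotProduct_le v z.2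
  obtain ⟨C₁, hC₁⟩ := exists_card_cubeMultiples_div_le hu z.1 (max K₁ K₂)
  obtain ⟨C₂, hC₂⟩ := exists_card_cubeMultiples_div_le hv z.2 (max K₁ K₂)
  refine ⟨|C₁ * C₂|, fun m B hm hB ↦ ?_⟩
  rcases eq_empty_or_nonempty {p ∈ pairCube z B | m ∈ (gcdDotProduct u v p).divisors} with
    hempty | ⟨p, hp⟩
  · rw [hempty, card_empty, Nat.cast_zero, zero_div]
    positivity
  obtain ⟨hcube, hmp⟩ := mem_filter.1 hp
  have hmB : m ≤ max K₁ K₂ * B := by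
    rw [max_mul_of_nonneg _ _ B.zero_le]
    exact (le_max_natAbs_of_mem_divisors_gcd hmp).trans (max_le_max
      (hK₁ B hB p.1 (mem_product.1 hcube).1) (hK₂ B hB p.2 (mem_product.1 hcube).2))
  have h₁ := hC₁ m B hm hB hmB
  calc (#{p ∈ pairCube z B | m ∈ (gcdDotProduct u v p).divisors} : ℝ) /
        (2 * (B : ℝ)) ^ (2 * Fintype.card ι)
      ≤ #{p ∈ pairCube z B | m ∣ gcdDotProduct u v p} / (2 * (B : ℝ)) ^ (2 * Fintype.card ι) := by
        gcongr with p
        exact Nat.dvd_of_mem_divisors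
    _ = #(cubeMultiples u z.1 m B) / (2 * (B : ℝ)) ^ Fintype.card ι *
        (#(cubeMultiples v z.2 m B) / (2 * (B : ℝ)) ^ Fintype.card ι) :=
        card_filter_dvd_gcdDotProduct_div u v z m B
    _ ≤ C₁ / m * (C₂ / m) :=
        mul_le_mul h₁ (hC₂ m B hm hB hmB) (by positivity) (le_trans (by positivity) h₁)
    _ = C₁ * C₂ * ((m : ℝ) ^ 2)⁻¹ := by rw [div_mul_div_comm, ← sq, div_eq_mul_inv]
    _ ≤ |C₁ * C₂| * ((m : ℝ) ^ 2)⁻¹ := by gcongr; exact le_abs_self _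

end Pairs

lemma pairCubeCount_gcd_eq {n : ℕ} (u v : Fin n → ℤ) (d : ℕ) (z : (Fin n → ℤ) × (Fin n → ℤ))
    (B : ℕ) :
    pairCubeCount {p | Int.gcd (∑ i, u i * p.1 i) (∑ i, v i * p.2 i) = d} z B =
      #{p ∈ pairCube z B | gcdDotProduct u v p = d} := by
  unfold pairCubeCount
  congr!

theorem density_gcd_dot_products_general {n : ℕ} {u v : Fin n → ℤ} (hu : univ.gcd u = 1)
    (hv : univ.gcd v = 1) {d : ℕ} (hd : 1 ≤ d) :
    HasPairDensity
      {p : (Fin n → ℤ) × (Fin n → ℤ) | Int.gcd (∑ i, u i * p.1 i) (∑ i, v i * p.2 i) = d}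
      ((d : ℝ) ^ 2 * zetaR 2)⁻¹ := by
  intro z
  obtain ⟨C, hC⟩ := exists_card_filter_mem_divisors_div_le hu hv z
  have hsummable : Summable fun m : ℕ ↦ C * ((m : ℝ) ^ 2)⁻¹ :=
    (Real.summable_nat_pow_inv.2 one_lt_two).mul_left C
  rw [← tsum_moebius_mul_inv_sq]
  have hsieve := tendsto_card_filter_eq_of_mem_divisors hsummable
    (fun m hm ↦ tendsto_card_filter_mem_divisors_div hu hv z hm)
    (by
      filter_upwards [eventually_gt_atTop 0] with B hB m hm
      rw [abs_of_nonneg (by positivity)]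
      exact hC m B hm hB) hd
  simpa only [pairCubeCount_gcd_eq, Fintype.card_fin] using hsieve

/-- For a primitive vector `u`, the density of pairs `(x, y)` with
`gcd(u·x, u·y) = d` is `(d² ζ(2))⁻¹`. -/
theorem density_gcd_dot_products (n : ℕ) (u : Fin n → ℤ)
    (hu : Finset.univ.gcd u = 1) (d : ℕ) (hd : 1 ≤ d) :
    HasPairDensity
      {p : (Fin n → ℤ) × (Fin n → ℤ) |
        Int.gcd (∑ i, u i * p.1 i) (∑ i, u i * p.2 i) = d}
      ((d : ℝ) ^ 2 * zetaR 2)⁻¹ :=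
  density_gcd_dot_products_general hu hu hd
end
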